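/- arXiv:2603.00982 — 7 statements merged into one kernel-verified Lean document; each statement's English description precedes it below -/
import Mathlib

section
/- Suppose c < 0 and 0 < γ < h. For each sufficiently small α > 0 let Z(α) ≥ 0 be a solution of the steady-state robust-queueing fixed-point equation Z(α) = sup_{u ≥ 0} { ρ(α)u − u/F̄(α·Z(α)) + b·√(ρ(α)·u·I_w(λ(α)u)/μ) }. Then lim_{α↓0} (−c)·μ·α^γ·Z(α) = b²·c_x²/4; equivalently, lim_{α↓0} (1 − ρ(α))·Z(α) = b²·c_x²/(4μ). -/
open Filter Set Topology

/-- The objective `(1 - ε) u - u / (1 - p) + b √((1 - ε) u I((1 - ε) μ u) / μ)` of the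
steady-state robust-queueing supremum, with `δ = 1 / (1 - p) - (1 - ε)` the negative drift. -/
noncomputable def rqObjective (Iw : ℝ → ℝ) (μ b ε δ u : ℝ) : ℝ :=
  -δ * u + b * Real.sqrt ((1 - ε) * u * Iw ((1 - ε) * μ * u) / μ)

theorem isLUB_image_of_coe_eq_iSup {s : Set ℝ} {f : ℝ → ℝ} {z : ℝ}
    (h : (z : EReal) = ⨆ u : {u : ℝ // u ∈ s}, ((f u : ℝ) : EReal)) : IsLUB (f '' s) z := by
  constructor
  · rintro _ ⟨u, hu, rfl⟩
    have := le_iSup (fun u : {u : ℝ // u ∈ s} => ((f u : ℝ) : EReal)) ⟨u, hu⟩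
    rw [← h] at this
    exact_mod_cast this
  · intro B hB
    have : (z : EReal) ≤ (B : EReal) := by
      rw [h]
      exact iSup_le fun u => by exact_mod_cast hB ⟨u, u.2, rfl⟩
    exact_mod_cast this

theorem neg_mul_add_mul_sqrt_le {δ b u s : ℝ} (hδ : 0 < δ) (hu : 0 ≤ u) (hs : 0 ≤ s) :
    -δ * u + b * Real.sqrt (u * s) ≤ b ^ 2 * s / (4 * δ) := by
  rw [Real.sqrt_mul hu, le_div_iff₀ (by positivity)]
  have h : (2 * δ * Real.sqrt u - b * Real.sqrt s) ^ 2
      = 4 * δ ^ 2 * u - 4 * δ * b * (Real.sqrt u * Real.sqrt s) + b ^ 2 * s := by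
    linear_combination 4 * δ ^ 2 * Real.sq_sqrt hu + b ^ 2 * Real.sq_sqrt hs
  linarith [sq_nonneg (2 * δ * Real.sqrt u - b * Real.sqrt s)]

theorem rqObjective_le {Iw : ℝ → ℝ} {μ b ε δ u s : ℝ} (hμ : 0 < μ) (hb : 0 < b)
    (hε : 0 < ε) (hε1 : ε < 1) (hδ : ε ≤ δ) (hu : 0 ≤ u) (hs : 0 ≤ s)
    (hI : Iw ((1 - ε) * μ * u) ≤ s) :
    rqObjective Iw μ b ε δ u ≤ b ^ 2 * s / (4 * μ * ε) := by
  have h1 : (1 - ε) * u * Iw ((1 - ε) * μ * u) / μ ≤ u * (s / μ) := by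
    rw [← mul_div_assoc]
    have : (1 - ε) * u * Iw ((1 - ε) * μ * u) ≤ (1 - ε) * u * s :=
      mul_le_mul_of_nonneg_left hI (mul_nonneg (by linarith) hu)
    have : (1 - ε) * u * s ≤ u * s := by nlinarith [mul_nonneg (mul_nonneg hε.le hu) hs]
    exact div_le_div_of_nonneg_right (by linarith) hμ.le
  calc rqObjective Iw μ b ε δ u
      ≤ -ε * u + b * Real.sqrt (u * (s / μ)) := by
        unfold rqObjective
        have := mul_le_mul_of_nonneg_right hδ hu
        have := mul_le_mul_of_nonneg_left (Real.sqrt_le_sqrt h1) hb.le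
        linarith
    _ ≤ b ^ 2 * (s / μ) / (4 * ε) := neg_mul_add_mul_sqrt_le hε hu (by positivity)
    _ = b ^ 2 * s / (4 * μ * ε) := by field_simp

theorem mul_le_of_isLUB_rqObjective {Iw : ℝ → ℝ} {μ b ε δ s z : ℝ} (hμ : 0 < μ) (hb : 0 < b)
    (hε : 0 < ε) (hε1 : ε < 1) (hδ : ε ≤ δ) (hs : 0 ≤ s) (hI : ∀ t, 0 ≤ t → Iw t ≤ s)
    (hz : IsLUB (rqObjective Iw μ b ε δ '' Ici 0) z) :
    ε * z ≤ b ^ 2 * s / (4 * μ) := by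
  have h : z ≤ b ^ 2 * s / (4 * μ * ε) := by
    refine hz.2 ?_
    rintro _ ⟨u, hu, rfl⟩
    refine rqObjective_le hμ hb hε hε1 hδ hu hs (hI _ ?_)
    exact mul_nonneg (mul_nonneg (by linarith) hμ.le) hu
  calc ε * z ≤ ε * (b ^ 2 * s / (4 * μ * ε)) := by gcongr
    _ = b ^ 2 * s / (4 * μ) := by field_simp

theorem eventually_mul_le_of_isLUB_rqObjective {ι : Type*} {l : Filter ι} {Iw : ℝ → ℝ}
    {μ b C s M : ℝ} {ε δ z : ι → ℝ} (hμ : 0 < μ) (hb : 0 < b) (hs : 0 < s) (hC0 : 0 ≤ C)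
    (hC : ∀ t, 0 ≤ t → Iw t ≤ C) (hM : ∀ t, M ≤ t → Iw t ≤ s)
    (hε : ∀ᶠ i in l, 0 < ε i) (hε0 : Tendsto ε l (𝓝 0)) (hδ : ∀ᶠ i in l, ε i ≤ δ i)
    (hz : ∀ᶠ i in l, IsLUB (rqObjective Iw μ b (ε i) (δ i) '' Ici 0) (z i)) :
    ∀ᶠ i in l, ε i * z i ≤ b ^ 2 * s / (4 * μ) := by
  set U : ℝ := 2 * |M| / μ with hU
  have hU0 : 0 ≤ U := by positivity
  set B : ℝ := b * Real.sqrt (U * C / μ) with hB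
  have hsmall : ∀ᶠ i in l, ε i * B < b ^ 2 * s / (4 * μ) := by
    have : Tendsto (fun i => ε i * B) l (𝓝 (0 * B)) := hε0.mul_const B
    rw [zero_mul] at this
    exact this.eventually_lt_const (by positivity)
  filter_upwards [hε, hε0.eventually_lt_const (show (0 : ℝ) < 1 / 2 by norm_num), hδ, hz, hsmall]
    with i hi hi1 hδi hzi hBi
  have h : z i ≤ b ^ 2 * s / (4 * μ * ε i) := by
    refine hzi.2 ?_
    rintro _ ⟨u, hu, rfl⟩
    have hu : 0 ≤ u := hu
    have hpos : 0 ≤ (1 - ε i) * μ * u := mul_nonneg (mul_nonneg (by linarith) hμ.le) hu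
    rcases le_total u U with huU | huU
    · have h1 : (1 - ε i) * u * Iw ((1 - ε i) * μ * u) / μ ≤ U * C / μ := by
        have : (1 - ε i) * u * Iw ((1 - ε i) * μ * u) ≤ (1 - ε i) * u * C :=
          mul_le_mul_of_nonneg_left (hC _ hpos) (mul_nonneg (by linarith) hu)
        have : (1 - ε i) * u * C ≤ U * C := by
          gcongr
          nlinarith
        exact div_le_div_of_nonneg_right (by linarith) hμ.le
      have h2 : rqObjective Iw μ b (ε i) (δ i) u ≤ B := by
        unfold rqObjective
        have := mul_le_mul_of_nonneg_left (Real.sqrt_le_sqrt h1) hb.le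
        have := mul_nonneg (hi.le.trans hδi) hu
        linarith
      refine h2.trans ?_
      rw [le_div_iff₀ (by positivity)]
      rw [lt_div_iff₀ (by positivity)] at hBi
      linarith
    · refine rqObjective_le hμ hb hi (by linarith) hδi hu hs.le (hM _ ?_)
      have h1 : 2 * |M| ≤ μ * u := by
        rw [hU, div_le_iff₀ hμ] at huU
        linarith
      have h2 := le_abs_self M
      nlinarith [mul_nonneg hμ.le hu]
  calc ε i * z i ≤ ε i * (b ^ 2 * s / (4 * μ * ε i)) := by gcongr
    _ = b ^ 2 * s / (4 * μ) := by field_simp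

theorem tendsto_mul_rqObjective {ι : Type*} {l : Filter ι} {Iw : ℝ → ℝ}
    {μ b cx2 : ℝ} {ε δ : ι → ℝ} (hμ : 0 < μ) (hb : 0 < b) (hcx2 : 0 < cx2)
    (hIw_lim : Tendsto Iw atTop (𝓝 cx2))
    (hε : ∀ᶠ i in l, 0 < ε i) (hε0 : Tendsto ε l (𝓝 0))
    (hδ : Tendsto (fun i => δ i / ε i) l (𝓝 1)) :
    Tendsto (fun i => ε i * rqObjective Iw μ b (ε i) (δ i) (b ^ 2 * cx2 / (4 * μ) / ε i ^ 2)) l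
      (𝓝 (b ^ 2 * cx2 / (4 * μ))) := by
  set A : ℝ := b ^ 2 * cx2 / (4 * μ) with hA
  have hA0 : 0 < A := by positivity
  have hone : Tendsto (fun i => 1 - ε i) l (𝓝 1) := by
    simpa using hε0.const_sub 1
  have hinv : Tendsto (fun i => (ε i ^ 2)⁻¹) l atTop := by
    refine Tendsto.inv_tendsto_nhdsGT_zero (tendsto_nhdsWithin_iff.2 ⟨?_, ?_⟩)
    · simpa using hε0.pow 2
    · filter_upwards [hε] with i hi
      exact pow_pos hi 2
  have harg : Tendsto (fun i => (1 - ε i) * μ * (A / ε i ^ 2)) l atTop := by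
    have h1 : Tendsto (fun i => (1 - ε i) * (μ * A)) l (𝓝 (1 * (μ * A))) := hone.mul_const _
    refine (h1.pos_mul_atTop (by positivity) hinv).congr fun i => ?_
    rw [div_eq_mul_inv]
    ring
  have hI := hIw_lim.comp harg
  have hlim : Tendsto (fun i => -(δ i / ε i) * A
      + b * Real.sqrt ((1 - ε i) * A * Iw ((1 - ε i) * μ * (A / ε i ^ 2)) / μ)) l
      (𝓝 (-1 * A + b * Real.sqrt (1 * A * cx2 / μ))) :=
    (hδ.neg.mul_const A).add
      (((((hone.mul_const A).mul hI).div_const μ).sqrt).const_mul b)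
  have hval : -1 * A + b * Real.sqrt (1 * A * cx2 / μ) = A := by
    have : 1 * A * cx2 / μ = (b * cx2 / (2 * μ)) ^ 2 := by
      rw [hA]
      field_simp
      ring
    rw [this, Real.sqrt_sq (by positivity), hA]
    field_simp
    ring
  rw [hval] at hlim
  refine hlim.congr' ?_
  filter_upwards [hε] with i hi
  have hs : (1 - ε i) * (A / ε i ^ 2) * Iw ((1 - ε i) * μ * (A / ε i ^ 2)) / μ
      = ((1 - ε i) * A * Iw ((1 - ε i) * μ * (A / ε i ^ 2)) / μ) / ε i ^ 2 := by ring
  rw [rqObjective, hs, Real.sqrt_div' _ (sq_nonneg (ε i)), Real.sqrt_sq hi.le]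
  field_simp

theorem tendsto_mul_of_isLUB_rqObjective {ι : Type*} {l : Filter ι} {Iw : ℝ → ℝ}
    {μ b C cx2 : ℝ} {ε δ z : ι → ℝ} (hμ : 0 < μ) (hb : 0 < b) (hcx2 : 0 < cx2) (hC0 : 0 ≤ C)
    (hC : ∀ t, 0 ≤ t → Iw t ≤ C) (hIw_lim : Tendsto Iw atTop (𝓝 cx2))
    (hε : ∀ᶠ i in l, 0 < ε i) (hε0 : Tendsto ε l (𝓝 0)) (hδ : ∀ᶠ i in l, ε i ≤ δ i)
    (hδ1 : Tendsto (fun i => δ i / ε i) l (𝓝 1))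
    (hz : ∀ᶠ i in l, IsLUB (rqObjective Iw μ b (ε i) (δ i) '' Ici 0) (z i)) :
    Tendsto (fun i => ε i * z i) l (𝓝 (b ^ 2 * cx2 / (4 * μ))) := by
  rw [tendsto_order]
  constructor
  · intro a ha
    filter_upwards [(tendsto_mul_rqObjective hμ hb hcx2 hIw_lim hε hε0 hδ1).eventually_const_lt ha,
      hε, hz] with i h1 hi hzi
    refine h1.trans_le (mul_le_mul_of_nonneg_left (hzi.1 ⟨_, ?_, rfl⟩) hi.le)
    exact mem_Ici.2 (by positivity)
  · intro a ha
    obtain ⟨s, hs1, hs2⟩ : ∃ s, cx2 < s ∧ b ^ 2 * s / (4 * μ) < a := by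
      rw [gt_iff_lt, div_lt_iff₀ (by positivity), mul_comm, ← lt_div_iff₀ (by positivity)] at ha
      obtain ⟨s, h1, h2⟩ := exists_between ha
      refine ⟨s, h1, ?_⟩
      rw [div_lt_iff₀ (by positivity), mul_comm]
      rwa [lt_div_iff₀ (by positivity)] at h2
    obtain ⟨M, hM⟩ := eventually_atTop.1 (hIw_lim.eventually_lt_const hs1)
    filter_upwards [eventually_mul_le_of_isLUB_rqObjective hμ hb (hcx2.trans hs1) hC0 hC
      (fun t ht => (hM t ht).le) hε hε0 hδ hz] with i hi
    exact hi.trans_lt hs2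

/-- A function whose one-sided derivatives of order `< k` vanish at `0` is `O(x ^ k)` there. -/
theorem isBigO_pow_of_iteratedDerivWithin_eq_zero {k : ℕ} {F : ℝ → ℝ}
    (hF_smooth : ContDiffOn ℝ k F (Ici 0))
    (hF_derivs : ∀ j < k, iteratedDerivWithin j F (Ici 0) 0 = 0) :
    F =O[𝓝[≥] 0] fun x => x ^ k := by
  have h := (taylor_isLittleO (convex_Ici (0 : ℝ)) self_mem_Ici hF_smooth).isBigO
  simp only [sub_zero] at h
  have hT : ∀ x, taylorWithinEval F k (Ici 0) 0 x
      = ((k.factorial : ℝ)⁻¹ * iteratedDerivWithin k F (Ici 0) 0) * x ^ k := by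
    intro x
    rw [taylor_within_apply, Finset.sum_range_succ, Finset.sum_eq_zero]
    · simp only [sub_zero, smul_eq_mul]
      ring
    · intro j hj
      rw [hF_derivs j (Finset.mem_range.1 hj), smul_zero]
  have h2 : (fun x => taylorWithinEval F k (Ici 0) 0 x) =O[𝓝[≥] 0] fun x => x ^ k := by
    simp only [hT]
    exact (Asymptotics.isBigO_refl _ _).const_mul_left _
  simpa using h.add h2

/-- If `F(x) = O(x ^ k)`, `α ^ γ w / α` is bounded and `γ < k / (k + 1)`, then
`F(w) = o(α ^ γ)`. -/
theorem tendsto_comp_div_rpow {k : ℕ} {F w : ℝ → ℝ} {γ D : ℝ}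
    (hF : F =O[𝓝[≥] 0] fun x => x ^ k) (hγh : γ < (k : ℝ) / (k + 1))
    (hw0 : ∀ᶠ α in 𝓝[>] (0 : ℝ), 0 ≤ w α)
    (hw : ∀ᶠ α in 𝓝[>] (0 : ℝ), w α ≤ D * α ^ (1 - γ)) :
    Tendsto w (𝓝[>] 0) (𝓝[≥] 0) ∧ Tendsto (fun α => F (w α) / α ^ γ) (𝓝[>] 0) (𝓝 0) := by
  have hk1 : (0 : ℝ) < k + 1 := by positivity
  have hγk : γ * (k + 1) < k := (lt_div_iff₀ hk1).1 hγh
  have hγ1 : 0 < 1 - γ := by nlinarith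
  have hrpow : ∀ p : ℝ, 0 < p → Tendsto (fun α : ℝ => α ^ p) (𝓝[>] 0) (𝓝 0) := fun p hp => by
    have := (Real.continuousAt_rpow_const 0 p (Or.inr hp.le)).tendsto
    rw [Real.zero_rpow hp.ne'] at this
    exact this.mono_left nhdsWithin_le_nhds
  have hwlim : Tendsto w (𝓝[>] 0) (𝓝[≥] 0) := by
    refine tendsto_nhdsWithin_iff.2 ⟨?_, hw0⟩
    refine tendsto_of_tendsto_of_tendsto_of_le_of_le' tendsto_const_nhds ?_ hw0 hw
    simpa using (hrpow _ hγ1).const_mul D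
  refine ⟨hwlim, ?_⟩
  obtain ⟨K, hK0, hK⟩ := hF.exists_pos
  refine squeeze_zero_norm' (a := fun α => K * D ^ k * α ^ ((1 - γ) * k - γ)) ?_ ?_
  · filter_upwards [hwlim.eventually hK.bound, hw0, hw, self_mem_nhdsWithin] with α h1 h2 h3 hα
    have hα : 0 < α := hα
    rw [Real.norm_of_nonneg (pow_nonneg h2 k)] at h1
    rw [norm_div, Real.norm_of_nonneg (Real.rpow_nonneg hα.le γ),
      div_le_iff₀ (Real.rpow_pos_of_pos hα γ), mul_assoc, ← Real.rpow_add hα, sub_add_cancel,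
      Real.rpow_mul_natCast hα.le, mul_assoc, ← mul_pow]
    exact h1.trans (by gcongr)
  · simpa using (hrpow _ (by linarith : 0 < (1 - γ) * k - γ)).const_mul (K * D ^ k)

/-- heavy-traffic limit of the RQ fixed point in the underloaded regime
(`c < 0`, `0 < γ < h = k/(k+1)`).  `F` is the patience CDF (with scaling
`F_α(x) = F(α x)`), `I_w` is the continuous bounded index of dispersion for work with
limit `c_x²`, `ρ(α) = 1 + c α^γ`, `λ(α) = ρ(α) μ`, and `Z α ≥ 0` solves the
steady-state RQ fixed-point equation for all sufficiently small `α > 0`.  Then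
`(-c) μ α^γ Z(α) → b² c_x² / 4`, equivalently `(1 - ρ(α)) Z(α) → b² c_x² / (4 μ)`. -/
theorem rq_heavy_traffic_underloaded
    (k : ℕ) (hk : 1 ≤ k)
    (F : ℝ → ℝ)
    (hF_mono : Monotone F)
    (hF_zero : ∀ x ≤ (0 : ℝ), F x = 0)
    (hF_range : ∀ x, 0 ≤ x → 0 ≤ F x ∧ F x < 1)
    (hF_lim : Tendsto F atTop (𝓝 1))
    (hF_smooth : ContDiffOn ℝ k F (Set.Ici 0))
    (hF_derivs : ∀ j < k, iteratedDerivWithin j F (Set.Ici 0) 0 = 0)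
    (hF_k : 0 < iteratedDerivWithin k F (Set.Ici 0) 0)
    (Iw : ℝ → ℝ) (hIw_cont : Continuous Iw)
    (hIw_nonneg : ∀ t, 0 ≤ t → 0 ≤ Iw t)
    (hIw_bdd : ∃ C : ℝ, ∀ t, 0 ≤ t → Iw t ≤ C)
    (cx2 : ℝ) (hcx2 : 0 < cx2)
    (hIw_lim : Tendsto Iw atTop (𝓝 cx2))
    (μ b γ c : ℝ) (hμ : 0 < μ) (hb : 0 < b) (hγ : 0 < γ)
    (hc : c < 0) (hγh : γ < (k : ℝ) / (k + 1))
    (Z : ℝ → ℝ)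
    (hZ : ∀ᶠ α in 𝓝[>] (0 : ℝ),
      0 ≤ Z α ∧
      (Z α : EReal) = ⨆ u : {u : ℝ // 0 ≤ u},
        (((1 + c * α ^ γ) * (u : ℝ) - (u : ℝ) / (1 - F (α * Z α))
          + b * Real.sqrt ((1 + c * α ^ γ) * (u : ℝ)
              * Iw ((1 + c * α ^ γ) * μ * (u : ℝ)) / μ) : ℝ) : EReal)) :
    Tendsto (fun α : ℝ => (-c) * μ * α ^ γ * Z α)
      (𝓝[>] (0 : ℝ)) (𝓝 (b ^ 2 * cx2 / 4)) ∧
    Tendsto (fun α : ℝ => (1 - (1 + c * α ^ γ)) * Z α)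
      (𝓝[>] (0 : ℝ)) (𝓝 (b ^ 2 * cx2 / (4 * μ))) := by
  obtain ⟨C, hC⟩ := hIw_bdd
  have hC0 : 0 ≤ C := (hIw_nonneg 0 le_rfl).trans (hC 0 le_rfl)
  set ε : ℝ → ℝ := fun α => -c * α ^ γ with hεdef
  set δ : ℝ → ℝ := fun α => ε α + F (α * Z α) / (1 - F (α * Z α)) with hδdef
  have hpos : ∀ᶠ α in 𝓝[>] (0 : ℝ), 0 < α := self_mem_nhdsWithin
  have hε : ∀ᶠ α in 𝓝[>] (0 : ℝ), 0 < ε α := by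
    filter_upwards [hpos] with α hα
    exact mul_pos (by linarith) (Real.rpow_pos_of_pos hα γ)
  have hε0 : Tendsto ε (𝓝[>] 0) (𝓝 0) := by
    have := ((Real.continuousAt_rpow_const 0 γ (Or.inr hγ.le)).tendsto.mono_left
      (nhdsWithin_le_nhds (s := Ioi 0))).const_mul (-c)
    simpa [hεdef, Real.zero_rpow hγ.ne'] using this
  have hw0 : ∀ᶠ α in 𝓝[>] (0 : ℝ), 0 ≤ α * Z α := by
    filter_upwards [hpos, hZ] with α hα h
    exact mul_nonneg hα.le h.1
  have hδ : ∀ᶠ α in 𝓝[>] (0 : ℝ), ε α ≤ δ α := by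
    filter_upwards [hw0] with α h
    have := hF_range _ h
    exact le_add_of_nonneg_right (div_nonneg this.1 (by linarith))
  have hz : ∀ᶠ α in 𝓝[>] (0 : ℝ), IsLUB (rqObjective Iw μ b (ε α) (δ α) '' Ici 0) (Z α) := by
    filter_upwards [hZ, hw0] with α h h0
    have hF1 : 1 - F (α * Z α) ≠ 0 := by linarith [(hF_range _ h0).2]
    refine isLUB_image_of_coe_eq_iSup (h.2.trans (iSup_congr fun u => ?_))
    have hρ : 1 + c * α ^ γ = 1 - ε α := by simp only [hεdef]; ring
    rw [hρ, rqObjective]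
    congr 2
    simp only [hδdef]
    field_simp
    ring
  have hw : ∀ᶠ α in 𝓝[>] (0 : ℝ),
      α * Z α ≤ b ^ 2 * C / (4 * μ) / (-c) * α ^ (1 - γ) := by
    filter_upwards [hpos, hε, hε0.eventually_lt_const one_pos, hδ, hz] with α hα h1 h2 h3 h4
    have h5 := mul_le_of_isLUB_rqObjective hμ hb h1 h2 h3 hC0 hC h4
    have hαγ := Real.rpow_pos_of_pos hα γ
    have hc' : 0 < -c := by linarith
    rw [Real.rpow_sub hα, Real.rpow_one, div_mul_div_comm, le_div_iff₀ (mul_pos hc' hαγ)]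
    calc α * Z α * (-c * α ^ γ) = α * (ε α * Z α) := by simp only [hεdef]; ring
      _ ≤ α * (b ^ 2 * C / (4 * μ)) := by gcongr
      _ = _ := mul_comm _ _
  obtain ⟨hwlim, hFo⟩ := tendsto_comp_div_rpow
    (isBigO_pow_of_iteratedDerivWithin_eq_zero hF_smooth hF_derivs) hγh hw0 hw
  have hFw : Tendsto (fun α => F (α * Z α)) (𝓝[>] 0) (𝓝 0) := by
    have := (hF_smooth.continuousOn 0 self_mem_Ici).tendsto.comp hwlim
    rwa [hF_zero 0 le_rfl] at this
  have hδ1 : Tendsto (fun α => δ α / ε α) (𝓝[>] 0) (𝓝 1) := by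
    have h1 : Tendsto (fun α => 1 + F (α * Z α) / α ^ γ / (-c) / (1 - F (α * Z α))) (𝓝[>] 0)
        (𝓝 (1 + 0 / (-c) / (1 - 0))) :=
      ((hFo.div_const (-c)).div (hFw.const_sub 1) (by norm_num)).const_add 1
    have h2 : (1 + 0 / (-c) / (1 - 0) : ℝ) = 1 := by simp
    rw [h2] at h1
    refine h1.congr' ?_
    filter_upwards [hε] with α h
    simp only [hδdef]
    rw [add_div, div_self h.ne', div_div, div_div, div_div]
    congr 2
    simp only [hεdef]
    ring
  have main := tendsto_mul_of_isLUB_rqObjective hμ hb hcx2 hC0 hC hIw_lim hε hε0 hδ hδ1 hz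
  constructor
  · have h := main.const_mul μ
    have hval : μ * (b ^ 2 * cx2 / (4 * μ)) = b ^ 2 * cx2 / 4 := by field_simp
    rw [hval] at h
    exact h.congr fun α => by simp only [hεdef]; ring
  · exact main.congr fun α => by simp only [hεdef]; ring
end

section
/- Suppose c > 0 and 0 < γ < h. For each sufficiently small α > 0 let Z(α) ≥ 0 be a solution of the steady-state robust-queueing fixed-point equation Z(α) = sup_{u ≥ 0} { ρ(α)u − u/F̄(α·Z(α)) + b·√(ρ(α)·u·I_w(λ(α)u)/μ) }. Then lim_{α↓0} α^{1−γ/k}·Z(α) = (c·k!/F^{(k)}(0))^{1/k}. In particular the limit is independent of b and of I_w, and depends on F only through F^{(k)}(0). -/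
open Filter Set Topology

/-- Leading-order Taylor behaviour at `0⁺` of a function whose first `k` derivatives vanish. -/
lemma tendsto_div_pow_of_iteratedDerivWithin_eq_zero {k : ℕ} {F : ℝ → ℝ}
    (hF : ContDiffOn ℝ k F (Ici 0))
    (hderivs : ∀ j < k, iteratedDerivWithin j F (Ici 0) 0 = 0) :
    Tendsto (fun x => F x / x ^ k) (𝓝[>] 0)
      (𝓝 (iteratedDerivWithin k F (Ici 0) 0 / k.factorial)) := by
  have h := (taylor_isLittleO (convex_Ici (0 : ℝ)) self_mem_Ici hF).mono
    (nhdsWithin_mono 0 Ioi_subset_Ici_self)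
  have h2 := h.tendsto_div_nhds_zero.add_const
    (iteratedDerivWithin k F (Ici 0) 0 / k.factorial)
  rw [zero_add] at h2
  refine h2.congr' ?_
  filter_upwards [self_mem_nhdsWithin] with x hx
  have hx0 : x ^ k ≠ 0 := pow_ne_zero _ (ne_of_gt hx)
  have hf : (k.factorial : ℝ) ≠ 0 := by positivity
  rw [taylor_within_apply, Finset.sum_range_succ, Finset.sum_eq_zero]
  · simp only [sub_zero, zero_add, smul_eq_mul]
    field_simp
    ring
  · intro j hj
    rw [hderivs j (Finset.mem_range.mp hj), smul_zero]

/-- A finite value of the robust-queueing supremum forces the drift `r - s` to be negative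
and bounds the value by a constant over `s - r`. -/
lemma robust_queueing_sup_bound {Iw : ℝ → ℝ} {C cx2 μ b r s z : ℝ}
    (hC : ∀ t, 0 ≤ t → Iw t ≤ C) (hcx2 : 0 < cx2) (hlim : Tendsto Iw atTop (𝓝 cx2))
    (hμ : 0 < μ) (hb : 0 < b) (hr : 0 < r)
    (hz : (z : EReal) = ⨆ u : {u : ℝ // 0 ≤ u},
      ((r * (u : ℝ) - (u : ℝ) / s
        + b * Real.sqrt (r * (u : ℝ) * Iw (r * μ * (u : ℝ)) / μ) : ℝ) : EReal)) :
    r < 1 / s ∧ z * (1 / s - r) ≤ b ^ 2 * r * C / (4 * μ) := by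
  have hle : ∀ u : ℝ, 0 ≤ u →
      r * u - u / s + b * Real.sqrt (r * u * Iw (r * μ * u) / μ) ≤ z := by
    intro u hu
    rw [← EReal.coe_le_coe_iff, hz]
    exact le_iSup (fun u : {u : ℝ // 0 ≤ u} => ((r * (u : ℝ) - (u : ℝ) / s
        + b * Real.sqrt (r * (u : ℝ) * Iw (r * μ * (u : ℝ)) / μ) : ℝ) : EReal)) ⟨u, hu⟩
  have hlt : r < 1 / s := by
    by_contra! hsr
    have h1 : Tendsto (fun u : ℝ => r * μ * u) atTop atTop :=
      tendsto_id.const_mul_atTop (by positivity)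
    have h2 : Tendsto (fun u : ℝ => r * u * Iw (r * μ * u)) atTop atTop :=
      (tendsto_id.const_mul_atTop hr).atTop_mul_pos hcx2 (hlim.comp h1)
    have h3 : Tendsto (fun u : ℝ => b * Real.sqrt (r * u * Iw (r * μ * u) / μ)) atTop atTop :=
      (Real.tendsto_sqrt_atTop.comp (h2.atTop_div_const hμ)).const_mul_atTop hb
    obtain ⟨u, hu, hu0⟩ := ((h3.eventually_gt_atTop z).and (eventually_ge_atTop 0)).exists
    have h4 := hle u hu0
    have h5 : u / s = 1 / s * u := by ring
    nlinarith [mul_nonneg (sub_nonneg.mpr hsr) hu0]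
  refine ⟨hlt, ?_⟩
  have hd : 0 < 1 / s - r := sub_pos.mpr hlt
  rw [← le_div_iff₀ hd, ← EReal.coe_le_coe_iff, hz]
  refine iSup_le fun ⟨u, hu⟩ => EReal.coe_le_coe_iff.mpr ?_
  have hC0 : 0 ≤ C := hcx2.le.trans <| le_of_tendsto hlim <|
    (eventually_ge_atTop 0).mono hC
  set w := Real.sqrt (r * u * Iw (r * μ * u) / μ) with hw
  have hw2 : w ^ 2 ≤ r * u * C / μ := by
    have h0 : 0 ≤ r * u * C / μ := by positivity
    calc w ^ 2 ≤ Real.sqrt (r * u * C / μ) ^ 2 := by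
          rw [hw]
          gcongr
          exact hC _ (by positivity)
      _ = r * u * C / μ := Real.sq_sqrt h0
  rw [le_div_iff₀ hd]
  rw [show r * u - u / s + b * w = b * w - (1 / s - r) * u by ring]
  generalize 1 / s - r = d at hd
  rcases hu.eq_or_lt with rfl | hu
  · have hw0 : w = 0 := by simp [hw]
    rw [hw0]
    have : 0 ≤ b ^ 2 * r * C / (4 * μ) := by positivity
    simpa using this
  · have h6 : b ^ 2 * w ^ 2 ≤ b ^ 2 * (r * u * C / μ) := by gcongr
    have h7 : b ^ 2 * r * C / (4 * μ) = b ^ 2 * (r * u * C / μ) / (4 * u) := by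
      field_simp
    rw [h7, le_div_iff₀ (by positivity)]
    nlinarith [sq_nonneg (b * w - 2 * d * u)]

/-- If `G x ∼ g x ^ k` at `0⁺` and `0 < G (x α) - c α ^ γ ≤ K α / x α`, then
`x α ∼ (c / g) ^ (1 / k) α ^ (γ / k)`. -/
lemma tendsto_div_rpow_of_balance {k : ℕ} (hk : 1 ≤ k) {G x : ℝ → ℝ} {g c γ K : ℝ}
    (hG : MonotoneOn G (Ici 0)) (hG0 : G 0 = 0) (hg : 0 < g) (hc : 0 < c) (hγ : 0 < γ)
    (hγk : γ < (k : ℝ) / (k + 1))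
    (hGk : Tendsto (fun y => G y / y ^ k) (𝓝[>] 0) (𝓝 g))
    (hx : ∀ᶠ α in 𝓝[>] (0 : ℝ), 0 ≤ x α ∧ c * α ^ γ < G (x α) ∧
      x α * (G (x α) - c * α ^ γ) ≤ K * α) :
    Tendsto (fun α => x α / α ^ (γ / k)) (𝓝[>] 0) (𝓝 ((c / g) ^ ((1 : ℝ) / k))) := by
  have hk0 : (0 : ℝ) < k := by exact_mod_cast hk
  have hpos : ∀ᶠ α in 𝓝[>] (0 : ℝ), 0 < α := self_mem_nhdsWithin
  have hrpow : ∀ p : ℝ, 0 < p → Tendsto (fun α : ℝ => α ^ p) (𝓝[>] 0) (𝓝 0) := by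
    intro p hp
    have h := (Real.continuousAt_rpow_const 0 p (Or.inr hp.le)).tendsto
    rw [Real.zero_rpow hp.ne'] at h
    exact h.mono_left nhdsWithin_le_nhds
  have hid : Tendsto (fun α : ℝ => α) (𝓝[>] 0) (𝓝 0) := nhdsWithin_le_nhds
  have hxpos : ∀ᶠ α in 𝓝[>] (0 : ℝ), 0 < x α := by
    filter_upwards [hx, hpos] with α ⟨h0, h1, _⟩ hα
    refine h0.lt_of_ne fun h => ?_
    rw [← h, hG0] at h1
    have : 0 < c * α ^ γ := by positivity
    linarith
  have hGpos : ∀ ε > 0, 0 < G ε := by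
    intro ε hε
    have h1 : ∀ᶠ y in 𝓝[>] (0 : ℝ), 0 < G y / y ^ k := hGk.eventually_const_lt hg
    have h2 : ∀ᶠ y in 𝓝[>] (0 : ℝ), y < ε := nhdsWithin_le_nhds (eventually_lt_nhds hε)
    obtain ⟨y, ⟨hy1, hy2⟩, hy0⟩ := ((h1.and h2).and self_mem_nhdsWithin).exists
    have hy0 : (0 : ℝ) < y := hy0
    exact ((div_pos_iff_of_pos_right (by positivity)).mp hy1).trans_le
      (hG hy0.le hε.le hy2.le)
  have hx0 : Tendsto x (𝓝[>] 0) (𝓝[>] 0) := by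
    refine tendsto_nhdsWithin_iff.mpr ⟨?_, hxpos⟩
    refine tendsto_order.mpr ⟨fun a ha => hxpos.mono fun _ h => ha.trans h, fun ε hε => ?_⟩
    have h1 : Tendsto (fun α : ℝ => K * α + ε * (c * α ^ γ)) (𝓝[>] 0) (𝓝 0) := by
      simpa using (hid.const_mul K).add (((hrpow γ hγ).const_mul c).const_mul ε)
    filter_upwards [hx, hxpos, h1.eventually_lt_const (mul_pos hε (hGpos ε hε))]
      with α ⟨_, h2, h3⟩ h4 h5
    by_contra! h6
    have h7 := hG hε.le h4.le h6
    have h8 : ε * (G (x α) - c * α ^ γ) ≤ x α * (G (x α) - c * α ^ γ) :=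
      mul_le_mul_of_nonneg_right h6 (by linarith)
    nlinarith [mul_le_mul_of_nonneg_left h7 hε.le]
  have hGx := hGk.comp hx0
  -- `m α ^ (γ / k)` is an eventual lower bound for `x α`.
  set m : ℝ := (c / (2 * g)) ^ ((1 : ℝ) / k) with hm
  have hmpos : 0 < m := by positivity
  have hlow : ∀ᶠ α in 𝓝[>] (0 : ℝ), m * α ^ (γ / k) ≤ x α := by
    filter_upwards [hx, hxpos, hpos, hGx.eventually_lt_const (show g < 2 * g by linarith)]
      with α ⟨_, h2, _⟩ h4 hα h5
    have h5 : G (x α) / x α ^ k < 2 * g := h5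
    rw [div_lt_iff₀ (by positivity)] at h5
    refine le_of_pow_le_pow_left₀ (by omega : k ≠ 0) h4.le ?_
    rw [mul_pow, hm, one_div, Real.rpow_inv_natCast_pow (by positivity) (by omega),
      ← Real.rpow_mul_natCast hα.le, div_mul_cancel₀ _ hk0.ne', div_mul_eq_mul_div,
      div_le_iff₀ (by positivity)]
    linarith
  have hexp : 0 < 1 - γ - γ / k := by
    rw [lt_div_iff₀ (by positivity)] at hγk
    have h : 1 - γ - γ / k = (k - γ * (k + 1)) / k := by
      field_simp
      ring
    rw [h]
    exact div_pos (by linarith) hk0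
  have hratio : Tendsto (fun α => G (x α) / α ^ γ) (𝓝[>] 0) (𝓝 c) := by
    have h1 : Tendsto (fun α : ℝ => c + K / m * α ^ (1 - γ - γ / k)) (𝓝[>] 0) (𝓝 c) := by
      simpa using ((hrpow _ hexp).const_mul (K / m)).const_add c
    refine tendsto_of_tendsto_of_tendsto_of_le_of_le' tendsto_const_nhds h1 ?_ ?_
    · filter_upwards [hx, hpos] with α ⟨_, h2, _⟩ hα
      rw [le_div_iff₀ (by positivity)]
      exact h2.le
    · filter_upwards [hx, hlow, hpos] with α ⟨_, h2, h3⟩ h4 hα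
      have h5 : m * α ^ (γ / k) * (G (x α) - c * α ^ γ) ≤ K * α :=
        (mul_le_mul_of_nonneg_right h4 (by linarith)).trans h3
      have h6 : α ^ (1 - γ - γ / k) = α / α ^ γ / α ^ (γ / k) := by
        rw [Real.rpow_sub hα, Real.rpow_sub hα, Real.rpow_one]
      rw [h6, div_le_iff₀ (by positivity)]
      have h7 : (c + K / m * (α / α ^ γ / α ^ (γ / k))) * α ^ γ
          = c * α ^ γ + K * α / (m * α ^ (γ / k)) := by
        have := Real.rpow_pos_of_pos hα γ
        have := Real.rpow_pos_of_pos hα (γ / k)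
        field_simp
      rw [h7, ← sub_le_iff_le_add', le_div_iff₀ (by positivity)]
      linarith
  have hpow : Tendsto (fun α => x α ^ k / α ^ γ) (𝓝[>] 0) (𝓝 (c / g)) := by
    refine (hratio.div hGx hg.ne').congr' ?_
    filter_upwards [hxpos, hpos] with α h1 hα
    have h2 := hGpos _ h1
    have := Real.rpow_pos_of_pos hα γ
    simp only [Pi.div_apply, Function.comp_apply]
    field_simp
  refine (hpow.rpow_const (p := (1 : ℝ) / k) (Or.inr (by positivity))).congr' ?_
  filter_upwards [hxpos, hpos] with α h1 hα
  rw [Real.div_rpow (by positivity) (by positivity), one_div,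
    Real.pow_rpow_inv_natCast h1.le (by omega), ← Real.rpow_mul hα.le, div_eq_mul_inv γ]

/-- heavy-traffic limit of the RQ fixed point in the overloaded regime
(`c > 0`, `0 < γ < h = k/(k+1)`).  Then `α^{1-γ/k} Z(α) → (c k! / F^{(k)}(0))^{1/k}`;
in particular the limit is independent of `b` and of `I_w`, and depends on `F` only
through `F^{(k)}(0)`. -/
theorem rq_heavy_traffic_overloaded
    (k : ℕ) (hk : 1 ≤ k)
    (F : ℝ → ℝ)
    (hF_mono : Monotone F)
    (hF_zero : ∀ x ≤ (0 : ℝ), F x = 0)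
    (hF_range : ∀ x, 0 ≤ x → 0 ≤ F x ∧ F x < 1)
    (hF_lim : Tendsto F atTop (𝓝 1))
    (hF_smooth : ContDiffOn ℝ k F (Set.Ici 0))
    (hF_derivs : ∀ j < k, iteratedDerivWithin j F (Set.Ici 0) 0 = 0)
    (hF_k : 0 < iteratedDerivWithin k F (Set.Ici 0) 0)
    (Iw : ℝ → ℝ) (hIw_cont : Continuous Iw)
    (hIw_nonneg : ∀ t, 0 ≤ t → 0 ≤ Iw t)
    (hIw_bdd : ∃ C : ℝ, ∀ t, 0 ≤ t → Iw t ≤ C)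
    (cx2 : ℝ) (hcx2 : 0 < cx2)
    (hIw_lim : Tendsto Iw atTop (𝓝 cx2))
    (μ b γ c : ℝ) (hμ : 0 < μ) (hb : 0 < b) (hγ : 0 < γ)
    (hc : 0 < c) (hγh : γ < (k : ℝ) / (k + 1))
    (Z : ℝ → ℝ)
    (hZ : ∀ᶠ α in 𝓝[>] (0 : ℝ),
      0 ≤ Z α ∧
      (Z α : EReal) = ⨆ u : {u : ℝ // 0 ≤ u},
        (((1 + c * α ^ γ) * (u : ℝ) - (u : ℝ) / (1 - F (α * Z α))
          + b * Real.sqrt ((1 + c * α ^ γ) * (u : ℝ)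
              * Iw ((1 + c * α ^ γ) * μ * (u : ℝ)) / μ) : ℝ) : EReal)) :
    Tendsto (fun α : ℝ => α ^ (1 - γ / (k : ℝ)) * Z α)
      (𝓝[>] (0 : ℝ))
      (𝓝 ((c * (Nat.factorial k) / iteratedDerivWithin k F (Set.Ici 0) 0)
        ^ ((1 : ℝ) / (k : ℝ)))) := by
  obtain ⟨C, hC⟩ := hIw_bdd
  have hC0 : 0 ≤ C := hcx2.le.trans <| le_of_tendsto hIw_lim <|
    (eventually_ge_atTop 0).mono hC
  have hF0 := hF_zero 0 le_rfl
  have hFk := tendsto_div_pow_of_iteratedDerivWithin_eq_zero hF_smooth hF_derivs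
  set D := iteratedDerivWithin k F (Set.Ici 0) 0
  have hpos : ∀ᶠ α in 𝓝[>] (0 : ℝ), 0 < α := self_mem_nhdsWithin
  have hFcont : Tendsto F (𝓝[>] 0) (𝓝 0) := by
    have h := (hF_smooth.continuousOn 0 self_mem_Ici).tendsto
    rw [hF0] at h
    exact h.mono_left (nhdsWithin_mono 0 Ioi_subset_Ici_self)
  have hGk : Tendsto (fun y => (1 / (1 - F y) - 1) / y ^ k) (𝓝[>] 0)
      (𝓝 (D / k.factorial)) := by
    have h := hFk.div (hFcont.const_sub 1) (by norm_num)
    rw [sub_zero, div_one] at h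
    refine h.congr' ?_
    filter_upwards [self_mem_nhdsWithin] with y hy
    have hy : 0 < y := hy
    have h1 : 1 - F y ≠ 0 := (sub_pos.mpr (hF_range y hy.le).2).ne'
    simp only [Pi.div_apply]
    field_simp
    ring
  have hGmono : MonotoneOn (fun y => 1 / (1 - F y) - 1) (Ici 0) := by
    intro y _ z hz hyz
    have h1 : 0 < 1 - F z := sub_pos.mpr (hF_range z hz).2
    have h2 := hF_mono hyz
    exact sub_le_sub_right (one_div_le_one_div_of_le h1 (by linarith)) 1
  have hρ : ∀ᶠ α in 𝓝[>] (0 : ℝ), 1 + c * α ^ γ < 2 := by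
    have h := (Real.continuousAt_rpow_const 0 γ (Or.inr hγ.le)).tendsto
    rw [Real.zero_rpow hγ.ne'] at h
    have h2 := ((h.const_mul c).const_add 1).mono_left (nhdsWithin_le_nhds (s := Ioi 0))
    exact h2.eventually_lt_const (by norm_num)
  have key := tendsto_div_rpow_of_balance (x := fun α => α * Z α)
    (K := b ^ 2 * 2 * C / (4 * μ)) hk hGmono (by simp [hF0])
    (div_pos hF_k (by positivity : (0 : ℝ) < k.factorial)) hc hγ hγh hGk (by
      filter_upwards [hZ, hpos, hρ] with α ⟨hZ0, hsup⟩ hα hρα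
      have hr : 0 < 1 + c * α ^ γ := by positivity
      obtain ⟨h1, h2⟩ := robust_queueing_sup_bound hC hcx2 hIw_lim hμ hb hr hsup
      refine ⟨by positivity, by linarith, ?_⟩
      have h3 : b ^ 2 * (1 + c * α ^ γ) * C / (4 * μ) ≤ b ^ 2 * 2 * C / (4 * μ) := by gcongr
      calc α * Z α * (1 / (1 - F (α * Z α)) - 1 - c * α ^ γ)
          = α * (Z α * (1 / (1 - F (α * Z α)) - (1 + c * α ^ γ))) := by ring
        _ ≤ α * (b ^ 2 * 2 * C / (4 * μ)) := by
          gcongr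
          exact h2.trans h3
        _ = b ^ 2 * 2 * C / (4 * μ) * α := mul_comm _ _)
  rw [show c * (k.factorial : ℝ) / D = c / (D / k.factorial) by rw [div_div_eq_mul_div]]
  refine key.congr' ?_
  filter_upwards [hpos] with α hα
  rw [Real.rpow_sub hα, Real.rpow_one]
  ring
end

section
/- Suppose c < 0 and 0 < γ < h. Then lim_{α↓0} (−c)·μ·α^γ·E(α) = 1; equivalently, E(α)/[ρ(α)/(μ(1 − ρ(α)))] → 1 as α ↓ 0, i.e. the mean steady-state virtual waiting time is asymptotically equal to the mean workload of the M/M/1 queue with arrival rate λ(α) and service rate μ. -/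
open Filter Set Topology MeasureTheory

/-- `J(α) = ∫_0^∞ exp{λ(α) ∫_0^x F̄(α u) du - μ x} dx` for the `M/M/1+GI` queue
with `ρ(α) = 1 + c α^γ`, `λ(α) = ρ(α) μ`, patience CDF `x ↦ F(α x)`. -/
noncomputable def Jq (F : ℝ → ℝ) (μ c γ α : ℝ) : ℝ :=
  ∫ x in Set.Ioi (0 : ℝ),
    Real.exp ((1 + c * α ^ γ) * μ * (∫ u in (0 : ℝ)..x, (1 - F (α * u))) - μ * x)

/-- `J₁(α) = ∫_0^∞ x exp{λ(α) ∫_0^x F̄(α u) du - μ x} dx`. -/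
noncomputable def J1q (F : ℝ → ℝ) (μ c γ α : ℝ) : ℝ :=
  ∫ x in Set.Ioi (0 : ℝ),
    x * Real.exp ((1 + c * α ^ γ) * μ * (∫ u in (0 : ℝ)..x, (1 - F (α * u))) - μ * x)

/-- Exact mean steady-state virtual waiting time `E(α) = λ(α) J₁(α) / (1 + λ(α) J(α))`
in the `M/M/1+GI` model. -/
noncomputable def Emean (F : ℝ → ℝ) (μ c γ α : ℝ) : ℝ :=
  (1 + c * α ^ γ) * μ * J1q F μ c γ α / (1 + (1 + c * α ^ γ) * μ * Jq F μ c γ α)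

/-- A function bounded by `1` whose derivatives of order `< k` vanish at the origin is
dominated by a multiple of `x ^ k` on the half-line. -/
lemma exists_le_mul_pow_of_iteratedDerivWithin_eq_zero {k : ℕ} (hk : 1 ≤ k) {F : ℝ → ℝ}
    (hF_le : ∀ x, 0 ≤ x → F x ≤ 1) (hF_smooth : ContDiffOn ℝ k F (Ici 0))
    (hF_derivs : ∀ j < k, iteratedDerivWithin j F (Ici 0) 0 = 0) :
    ∃ C : ℝ, ∀ x, 0 ≤ x → F x ≤ C * x ^ k := by
  obtain ⟨n, rfl⟩ : ∃ n, k = n + 1 := ⟨k - 1, by omega⟩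
  obtain ⟨C, hC⟩ := exists_taylor_mean_remainder_bound (f := F) (n := n) zero_le_one
    ((by exact_mod_cast hF_smooth : ContDiffOn ℝ (n + 1) F (Ici 0)).mono Icc_subset_Ici_self)
  have hset : (Icc 0 1 : Set ℝ) =ᶠ[𝓝 0] Ici 0 := by
    filter_upwards [Iio_mem_nhds (zero_lt_one' ℝ)] with x hx
    exact propext ⟨fun h => h.1, fun h => ⟨h, le_of_lt hx⟩⟩
  have htaylor : ∀ x, taylorWithinEval F n (Icc 0 1) 0 x = 0 := by
    intro x
    rw [taylor_within_apply]
    refine Finset.sum_eq_zero fun j hj => ?_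
    rw [iteratedDerivWithin, iteratedFDerivWithin_congr_set hset, ← iteratedDerivWithin,
      hF_derivs j (Finset.mem_range.mp hj), smul_zero]
  refine ⟨max C 1, fun x hx => ?_⟩
  have hpow : 0 ≤ x ^ (n + 1) := by positivity
  rcases le_total x 1 with h1 | h1
  · have h := hC x ⟨hx, h1⟩
    rw [htaylor, sub_zero, sub_zero] at h
    exact (le_abs_self _).trans (h.trans (mul_le_mul_of_nonneg_right (le_max_left _ _) hpow))
  · calc F x ≤ 1 := hF_le x hx
      _ ≤ x ^ (n + 1) := one_le_pow₀ h1
      _ ≤ max C 1 * x ^ (n + 1) := le_mul_of_one_le_left hpow (le_max_right _ _)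

/-- Bounds on the exponent of the density of the virtual waiting time with load `1 - ε`. -/
lemma exponent_bounds {k : ℕ} {F : ℝ → ℝ} (hF_mono : Monotone F) (hF_zero : F 0 = 0)
    {C : ℝ} (hC : ∀ x, 0 ≤ x → F x ≤ C * x ^ k) {μ ε α x : ℝ} (hμ : 0 < μ)
    (hε : 0 ≤ ε) (hε1 : ε ≤ 1) (hα : 0 ≤ α) (hx : 0 ≤ x) :
    -(ε * μ * x) - μ * (C * α ^ k * x ^ (k + 1)) ≤
        (1 - ε) * μ * (∫ u in (0 : ℝ)..x, (1 - F (α * u))) - μ * x ∧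
      (1 - ε) * μ * (∫ u in (0 : ℝ)..x, (1 - F (α * u))) - μ * x ≤ -(ε * μ * x) := by
  have hmono : Monotone fun u => F (α * u) :=
    fun a b hab => hF_mono (mul_le_mul_of_nonneg_left hab hα)
  have hint : IntervalIntegrable (fun u => F (α * u)) volume 0 x := hmono.intervalIntegrable
  have hsub : (∫ u in (0 : ℝ)..x, (1 - F (α * u))) = x - ∫ u in (0 : ℝ)..x, F (α * u) := by
    rw [intervalIntegral.integral_sub (by simp) hint]
    simp
  have hnonneg : 0 ≤ ∫ u in (0 : ℝ)..x, F (α * u) := by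
    refine intervalIntegral.integral_nonneg hx fun u hu => ?_
    rw [← hF_zero]
    exact hF_mono (mul_nonneg hα hu.1)
  have hle : (∫ u in (0 : ℝ)..x, F (α * u)) ≤ C * α ^ k * x ^ (k + 1) := by
    calc (∫ u in (0 : ℝ)..x, F (α * u)) ≤ ∫ _ in (0 : ℝ)..x, F (α * x) :=
          intervalIntegral.integral_mono_on hx hint (by simp) fun u hu => hmono hu.2
      _ = x * F (α * x) := by simp
      _ ≤ x * (C * (α * x) ^ k) :=
          mul_le_mul_of_nonneg_left (hC _ (mul_nonneg hα hx)) hx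
      _ = C * α ^ k * x ^ (k + 1) := by ring
  rw [hsub]
  generalize (∫ u in (0 : ℝ)..x, F (α * u)) = I at hnonneg hle
  constructor
  · have h1 : μ * I ≤ μ * (C * α ^ k * x ^ (k + 1)) := mul_le_mul_of_nonneg_left hle hμ.le
    have h2 : 0 ≤ ε * μ * I := by positivity
    linarith
  · have h1 : 0 ≤ (1 - ε) * μ * I := mul_nonneg (mul_nonneg (by linarith) hμ.le) hnonneg
    linarith

/-- Rescaled moments: `ε ^ (n + 1) ∫ x ^ n exp(…) dx → n! / μ ^ (n + 1)` whenever the load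
`1 - ε` tends to `1` from below slowly enough that `α ^ k / ε ^ (k + 1) → 0`. -/
lemma tendsto_rescaled_moment {k : ℕ} {F : ℝ → ℝ} (hF_mono : Monotone F) (hF_zero : F 0 = 0)
    {C : ℝ} (hC : ∀ x, 0 ≤ x → F x ≤ C * x ^ k) {μ : ℝ} (hμ : 0 < μ) {ε : ℝ → ℝ}
    (hε : ∀ᶠ α in 𝓝[>] (0 : ℝ), 0 < ε α) (hε1 : ∀ᶠ α in 𝓝[>] (0 : ℝ), ε α ≤ 1)
    (hslow : Tendsto (fun α => α ^ k * (ε α)⁻¹ ^ (k + 1)) (𝓝[>] (0 : ℝ)) (𝓝 0)) (n : ℕ) :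
    Tendsto (fun α => ε α ^ (n + 1) * ∫ x in Ioi (0 : ℝ), x ^ n *
        Real.exp ((1 - ε α) * μ * (∫ u in (0 : ℝ)..x, (1 - F (α * u))) - μ * x))
      (𝓝[>] (0 : ℝ)) (𝓝 (n.factorial / μ ^ (n + 1))) := by
  set Φ : ℝ → ℝ → ℝ := fun α x =>
    (1 - ε α) * μ * (∫ u in (0 : ℝ)..x, (1 - F (α * u))) - μ * x with hΦ
  have hpos : ∀ᶠ α in 𝓝[>] (0 : ℝ), 0 < α := self_mem_nhdsWithin
  have hgamma : ∫ t in Ioi (0 : ℝ), t ^ n * Real.exp (-(μ * t)) =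
      n.factorial / μ ^ (n + 1) := by
    have h := Real.integral_rpow_mul_exp_neg_mul_Ioi (a := (n : ℝ) + 1) (by positivity) hμ
    simp only [add_sub_cancel_right, Real.rpow_natCast] at h
    rw [h, Real.Gamma_nat_eq_factorial]
    norm_cast
    rw [one_div, inv_pow]
    field_simp
  have hint : IntegrableOn (fun t => t ^ n * Real.exp (-(μ * t))) (Ioi 0) :=
    .of_integral_ne_zero (by rw [hgamma]; positivity)
  have hbounds : ∀ᶠ α in 𝓝[>] (0 : ℝ), ∀ t, 0 < t →
      -(μ * t) - μ * C * t ^ (k + 1) * (α ^ k * (ε α)⁻¹ ^ (k + 1)) ≤ Φ α ((ε α)⁻¹ * t) ∧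
        Φ α ((ε α)⁻¹ * t) ≤ -(μ * t) := by
    filter_upwards [hε, hε1, hpos] with α h0 h1 hα t ht
    have h := exponent_bounds hF_mono hF_zero hC hμ h0.le h1 hα.le
      (mul_nonneg (inv_nonneg.mpr h0.le) ht.le)
    have e : ε α * μ * ((ε α)⁻¹ * t) = μ * t := by field_simp
    rw [e] at h
    exact ⟨le_of_eq_of_le (by ring) h.1, h.2⟩
  have hscale : ∀ᶠ α in 𝓝[>] (0 : ℝ),
      ∫ t in Ioi (0 : ℝ), t ^ n * Real.exp (Φ α ((ε α)⁻¹ * t)) =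
        ε α ^ (n + 1) * ∫ x in Ioi (0 : ℝ), x ^ n * Real.exp (Φ α x) := by
    filter_upwards [hε] with α h0
    have h := integral_comp_mul_left_Ioi (fun x => x ^ n * Real.exp (Φ α x)) 0
      (inv_pos.mpr h0)
    rw [mul_zero, inv_inv, smul_eq_mul] at h
    rw [pow_succ, mul_assoc, ← h, ← integral_const_mul]
    refine integral_congr_ae (Eventually.of_forall fun t => ?_)
    simp only [mul_pow, inv_pow]
    field_simp
  rw [← hgamma]
  refine Tendsto.congr' hscale ?_
  refine tendsto_integral_filter_of_dominated_convergence _ ?_ ?_ hint ?_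
  · filter_upwards [hpos] with α hα
    have hmono : Monotone fun u => F (α * u) :=
      fun a b hab => hF_mono (mul_le_mul_of_nonneg_left hab hα.le)
    have hcont : Continuous fun x => ∫ u in (0 : ℝ)..x, (1 - F (α * u)) :=
      intervalIntegral.continuous_primitive
        (fun a b => IntervalIntegrable.sub (by simp) hmono.intervalIntegrable) 0
    have hΦcont : Continuous (Φ α) := by
      rw [hΦ]
      exact (continuous_const.mul hcont).sub (continuous_const.mul continuous_id)
    exact ((continuous_pow n).mul (Real.continuous_exp.comp
      (hΦcont.comp (continuous_const.mul continuous_id)))).aestronglyMeasurable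
  · filter_upwards [hbounds] with α h
    filter_upwards [ae_restrict_mem measurableSet_Ioi] with t ht
    have ht' : 0 < t := ht
    rw [Real.norm_of_nonneg (by positivity)]
    exact mul_le_mul_of_nonneg_left (Real.exp_le_exp.mpr (h t ht').2) (by positivity)
  · filter_upwards [ae_restrict_mem measurableSet_Ioi] with t ht
    refine ((Real.continuous_exp.tendsto _).comp ?_).const_mul _
    have hlow : Tendsto (fun α => -(μ * t) - μ * C * t ^ (k + 1) *
        (α ^ k * (ε α)⁻¹ ^ (k + 1))) (𝓝[>] (0 : ℝ)) (𝓝 (-(μ * t))) := by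
      simpa using (hslow.const_mul (μ * C * t ^ (k + 1))).const_sub (-(μ * t))
    exact tendsto_of_tendsto_of_tendsto_of_le_of_le' hlow tendsto_const_nhds
      (hbounds.mono fun α h => (h t ht).1) (hbounds.mono fun α h => (h t ht).2)

/-- A positive power of `α` tends to zero as `α ↓ 0`. -/
lemma tendsto_rpow_nhdsGT_zero {s : ℝ} (hs : 0 < s) :
    Tendsto (fun α : ℝ => α ^ s) (𝓝[>] (0 : ℝ)) (𝓝 0) := by
  have h := (Real.continuousAt_rpow_const 0 s (Or.inr hs.le)).tendsto
  rw [Real.zero_rpow hs.ne'] at h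
  exact h.mono_left nhdsWithin_le_nhds

/-- underloaded heavy-traffic limit for the exact `M/M/1+GI` mean
virtual waiting time: if `c < 0` and `0 < γ < h = k/(k+1)` then
`(-c) μ α^γ E(α) → 1`, equivalently `E(α) / [ρ(α)/(μ(1-ρ(α)))] → 1`. -/
theorem mm1gi_heavy_traffic_underloaded
    (k : ℕ) (hk : 1 ≤ k)
    (F : ℝ → ℝ)
    (hF_mono : Monotone F)
    (hF_zero : ∀ x ≤ (0 : ℝ), F x = 0)
    (hF_range : ∀ x, 0 ≤ x → 0 ≤ F x ∧ F x < 1)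
    (hF_lim : Tendsto F atTop (𝓝 1))
    (hF_smooth : ContDiffOn ℝ k F (Set.Ici 0))
    (hF_derivs : ∀ j < k, iteratedDerivWithin j F (Set.Ici 0) 0 = 0)
    (hF_k : 0 < iteratedDerivWithin k F (Set.Ici 0) 0)
    (μ γ c : ℝ) (hμ : 0 < μ) (hγ : 0 < γ)
    (hc : c < 0) (hγh : γ < (k : ℝ) / (k + 1))
    (hJ : ∀ᶠ α in 𝓝[>] (0 : ℝ), IntegrableOn
      (fun x : ℝ => Real.exp ((1 + c * α ^ γ) * μ *
        (∫ u in (0 : ℝ)..x, (1 - F (α * u))) - μ * x)) (Set.Ioi 0))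
    (hJ1 : ∀ᶠ α in 𝓝[>] (0 : ℝ), IntegrableOn
      (fun x : ℝ => x * Real.exp ((1 + c * α ^ γ) * μ *
        (∫ u in (0 : ℝ)..x, (1 - F (α * u))) - μ * x)) (Set.Ioi 0)) :
    Tendsto (fun α : ℝ => (-c) * μ * α ^ γ * Emean F μ c γ α)
      (𝓝[>] (0 : ℝ)) (𝓝 1) ∧
    Tendsto (fun α : ℝ =>
        Emean F μ c γ α / ((1 + c * α ^ γ) / (μ * (1 - (1 + c * α ^ γ)))))
      (𝓝[>] (0 : ℝ)) (𝓝 1) := by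
  obtain ⟨C, hC⟩ := exists_le_mul_pow_of_iteratedDerivWithin_eq_zero hk
    (fun x hx => (hF_range x hx).2.le) hF_smooth hF_derivs
  set ε : ℝ → ℝ := fun α => -c * α ^ γ with hεdef
  have hload : ∀ α : ℝ, 1 + c * α ^ γ = 1 - ε α := fun α => by simp only [hεdef]; ring
  have hpos : ∀ᶠ α in 𝓝[>] (0 : ℝ), 0 < α := self_mem_nhdsWithin
  have hc' : 0 < -c := neg_pos.mpr hc
  have hε : ∀ᶠ α in 𝓝[>] (0 : ℝ), 0 < ε α := by
    filter_upwards [hpos] with α hα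
    exact mul_pos hc' (Real.rpow_pos_of_pos hα γ)
  have hε0 : Tendsto ε (𝓝[>] (0 : ℝ)) (𝓝 0) := by
    simpa [hεdef] using (tendsto_rpow_nhdsGT_zero hγ).const_mul (-c)
  have hε1 : ∀ᶠ α in 𝓝[>] (0 : ℝ), ε α < 1 := hε0.eventually_lt_const one_pos
  have hslow : Tendsto (fun α => α ^ k * (ε α)⁻¹ ^ (k + 1)) (𝓝[>] (0 : ℝ)) (𝓝 0) := by
    have hs : 0 < (k : ℝ) - γ * (k + 1) := by
      rw [lt_div_iff₀ (by positivity)] at hγh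
      linarith
    have h := (tendsto_rpow_nhdsGT_zero hs).const_mul ((-c)⁻¹ ^ (k + 1))
    rw [mul_zero] at h
    refine h.congr' ?_
    filter_upwards [hpos] with α hα
    have e : α ^ (γ * ((k : ℝ) + 1)) = (α ^ γ) ^ (k + 1) := by
      rw [Real.rpow_mul hα.le, ← Real.rpow_natCast]
      push_cast
      rfl
    rw [Real.rpow_sub hα, Real.rpow_natCast, e]
    simp only [hεdef, mul_inv, mul_pow, inv_pow, div_eq_mul_inv]
    ring
  have hF0 : F 0 = 0 := hF_zero 0 le_rfl
  have hεle : ∀ᶠ α in 𝓝[>] (0 : ℝ), ε α ≤ 1 := hε1.mono fun _ h => h.le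
  have hm0 : Tendsto (fun α => ε α * Jq F μ c γ α) (𝓝[>] (0 : ℝ)) (𝓝 (1 / μ)) := by
    simpa [Jq, hload] using tendsto_rescaled_moment hF_mono hF0 hC hμ hε hεle hslow 0
  have hm1 : Tendsto (fun α => ε α ^ 2 * J1q F μ c γ α) (𝓝[>] (0 : ℝ)) (𝓝 (1 / μ ^ 2)) := by
    simpa [J1q, hload] using tendsto_rescaled_moment hF_mono hF0 hC hμ hε hεle hslow 1
  have hl : Tendsto (fun α => 1 - ε α) (𝓝[>] (0 : ℝ)) (𝓝 1) := by
    simpa using hε0.const_sub 1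
  have hmain : Tendsto (fun α => μ * ε α * Emean F μ c γ α) (𝓝[>] (0 : ℝ)) (𝓝 1) := by
    have hnum := (((hl.mul_const μ).mul hm1).const_mul μ)
    have hden := hε0.add ((hl.mul_const μ).mul hm0)
    have h := hnum.div hden (by field_simp; simp)
    have hone : μ * (1 * μ * (1 / μ ^ 2)) / (0 + 1 * μ * (1 / μ)) = 1 := by field_simp; simp
    rw [hone] at h
    refine h.congr' ?_
    filter_upwards [hε] with α h0
    simp only [Emean, hload, Pi.div_apply]
    rw [show ε α + (1 - ε α) * μ * (ε α * Jq F μ c γ α) =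
      ε α * (1 + (1 - ε α) * μ * Jq F μ c γ α) by ring, ← mul_div_assoc,
      ← mul_div_mul_left _ (1 + (1 - ε α) * μ * Jq F μ c γ α) h0.ne']
    ring
  constructor
  · refine hmain.congr fun α => ?_
    simp only [hεdef]
    ring
  · have h := hmain.div hl one_ne_zero
    rw [div_one] at h
    refine h.congr fun α => ?_
    simp only [Pi.div_apply, hload, sub_sub_cancel]
    rw [div_div_eq_mul_div]
    ring
end

section
/- Suppose c > 0 and 0 < γ < h. Then lim_{α↓0} α^{1−γ/k}·E(α) = (c·k!/F^{(k)}(0))^{1/k}. -/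
open Filter Set Topology MeasureTheory

/-- For a `C¹` concave phase `ψ` with critical point `x₀` and slope at least `B` in absolute value
outside the `A`-neighbourhood of `x₀`, the weight `exp ψ` concentrates near `x₀`. -/
theorem intervalIntegral_abs_sub_mul_exp_le {ψ g : ℝ → ℝ} (hψ : ∀ x, HasDerivAt ψ (g x) x)
    (hg : Continuous g) (hanti : Antitone g) {x₀ A B X : ℝ} (hx₀ : 0 ≤ x₀) (hgx₀ : g x₀ = 0)
    (hA : 0 ≤ A) (hB : 0 < B) (hAB : ∀ x, A ≤ |x - x₀| → B ≤ |g x|) (hX : x₀ ≤ X) :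
    ∫ x in (0 : ℝ)..X, |x - x₀| * Real.exp (ψ x) ≤
      (A + 1 / B) * ∫ x in (0 : ℝ)..X, Real.exp (ψ x) := by
  have hψc : Continuous ψ := continuous_iff_continuousAt.2 fun x => (hψ x).continuousAt
  have hparts : ∫ x in (0 : ℝ)..X, (Real.exp (ψ x) + (x - x₀) * (Real.exp (ψ x) * g x)) =
      (X - x₀) * Real.exp (ψ X) - (0 - x₀) * Real.exp (ψ 0) := by
    refine intervalIntegral.integral_eq_sub_of_hasDerivAt
      (f := fun x => (x - x₀) * Real.exp (ψ x)) (fun x _ => ?_)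
      (Continuous.intervalIntegrable (by fun_prop) _ _)
    simpa using ((hasDerivAt_id x).sub_const x₀).fun_mul (hψ x).exp
  rw [intervalIntegral.integral_add (Continuous.intervalIntegrable (by fun_prop) _ _)
    (Continuous.intervalIntegrable (by fun_prop) _ _)] at hparts
  have hpoint : ∀ x, |x - x₀| * Real.exp (ψ x) ≤
      A * Real.exp (ψ x) + (-(1 / B)) * ((x - x₀) * (Real.exp (ψ x) * g x)) := by
    intro x
    have hsign : (x - x₀) * g x = -(|x - x₀| * |g x|) := by
      rcases le_total x x₀ with h | h
      · have := hanti h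
        rw [abs_of_nonpos (by linarith), abs_of_nonneg (by linarith)]; ring
      · have := hanti h
        rw [abs_of_nonneg (by linarith), abs_of_nonpos (by linarith)]; ring
    have hbound : |x - x₀| ≤ A + 1 / B * (|x - x₀| * |g x|) := by
      rcases le_total A |x - x₀| with h | h
      · have h1 : |x - x₀| * B ≤ |x - x₀| * |g x| :=
          mul_le_mul_of_nonneg_left (hAB x h) (abs_nonneg _)
        have h2 : |x - x₀| ≤ 1 / B * (|x - x₀| * |g x|) := by
          rw [one_div, inv_mul_eq_div, le_div_iff₀ hB]; exact h1
        linarith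
      · have : 0 ≤ 1 / B * (|x - x₀| * |g x|) := by positivity
        linarith
    calc |x - x₀| * Real.exp (ψ x)
        ≤ (A + 1 / B * (|x - x₀| * |g x|)) * Real.exp (ψ x) :=
          mul_le_mul_of_nonneg_right hbound (Real.exp_pos _).le
      _ = A * Real.exp (ψ x) + (-(1 / B)) * (((x - x₀) * g x) * Real.exp (ψ x)) := by
          rw [hsign]; ring
      _ = _ := by ring
  have hint := intervalIntegral.integral_mono_on (μ := volume) (hx₀.trans hX)
    (Continuous.intervalIntegrable (by fun_prop) _ _)
    (Continuous.intervalIntegrable (by fun_prop) _ _) (fun x _ => hpoint x)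
  rw [intervalIntegral.integral_add (Continuous.intervalIntegrable (by fun_prop) _ _)
    (Continuous.intervalIntegrable (by fun_prop) _ _), intervalIntegral.integral_const_mul,
    intervalIntegral.integral_const_mul] at hint
  have hboundary : 0 ≤ (X - x₀) * Real.exp (ψ X) - (0 - x₀) * Real.exp (ψ 0) := by
    have h1 : 0 ≤ (X - x₀) * Real.exp (ψ X) :=
      mul_nonneg (by linarith) (Real.exp_pos _).le
    have h2 : 0 ≤ x₀ * Real.exp (ψ 0) := mul_nonneg hx₀ (Real.exp_pos _).le
    linarith
  have hB' : 0 ≤ 1 / B := by positivity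
  nlinarith

/-- Half-line version of the concentration estimate: the first moment of `exp ψ` is close to
`m` times its mass whenever `m` lies between points where `ψ` has slope `≥ B` and `≤ -B`. -/
theorem abs_integral_id_mul_exp_sub_le {ψ g : ℝ → ℝ} (hψ : ∀ x, HasDerivAt ψ (g x) x)
    (hg : Continuous g) (hanti : Antitone g) {x₁ x₂ m B : ℝ} (hx₁ : 0 ≤ x₁) (hm₁ : x₁ ≤ m)
    (hm₂ : m ≤ x₂) (hB : 0 < B) (hgx₁ : B ≤ g x₁) (hgx₂ : g x₂ ≤ -B)
    (hJ : IntegrableOn (fun x => Real.exp (ψ x)) (Ioi 0))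
    (hJ₁ : IntegrableOn (fun x => x * Real.exp (ψ x)) (Ioi 0)) :
    |(∫ x in Ioi (0 : ℝ), x * Real.exp (ψ x)) - m * ∫ x in Ioi (0 : ℝ), Real.exp (ψ x)| ≤
      (2 * (x₂ - x₁) + 1 / B) * ∫ x in Ioi (0 : ℝ), Real.exp (ψ x) := by
  have hψc : Continuous ψ := continuous_iff_continuousAt.2 fun x => (hψ x).continuousAt
  obtain ⟨x₀, ⟨h₁, h₂⟩, hgx₀⟩ : ∃ x ∈ Icc x₁ x₂, g x = 0 :=
    intermediate_value_Icc' (hm₁.trans hm₂) hg.continuousOn ⟨by linarith, by linarith⟩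
  have hslope : ∀ x, x₂ - x₁ ≤ |x - x₀| → B ≤ |g x| := by
    intro x hx
    rcases le_abs.1 hx with h | h
    · have := hanti (show x₂ ≤ x by linarith)
      exact le_abs.2 (Or.inr (by linarith))
    · have := hanti (show x ≤ x₁ by linarith)
      exact le_abs.2 (Or.inl (by linarith))
  refine le_of_tendsto_of_tendsto
    ((intervalIntegral_tendsto_integral_Ioi 0 hJ₁ tendsto_id).sub
      ((intervalIntegral_tendsto_integral_Ioi 0 hJ tendsto_id).const_mul m)).abs
    ((intervalIntegral_tendsto_integral_Ioi 0 hJ tendsto_id).const_mul _) ?_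
  filter_upwards [eventually_ge_atTop x₀] with X hX
  have hX0 : 0 ≤ X := (hx₁.trans h₁).trans hX
  simp only [id]
  have hconc := intervalIntegral_abs_sub_mul_exp_le hψ hg hanti (hx₁.trans h₁) hgx₀
    (by linarith : 0 ≤ x₂ - x₁) hB hslope hX
  rw [← intervalIntegral.integral_const_mul, ← intervalIntegral.integral_sub
    (Continuous.intervalIntegrable (by fun_prop) _ _)
    (Continuous.intervalIntegrable (by fun_prop) _ _)]
  refine (intervalIntegral.abs_integral_le_integral_abs hX0).trans ?_
  have hmono : ∫ x in (0 : ℝ)..X, |x * Real.exp (ψ x) - m * Real.exp (ψ x)| ≤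
      ∫ x in (0 : ℝ)..X, (|x - x₀| * Real.exp (ψ x) + (x₂ - x₁) * Real.exp (ψ x)) := by
    refine intervalIntegral.integral_mono_on hX0
      (Continuous.intervalIntegrable (by fun_prop) _ _)
      (Continuous.intervalIntegrable (by fun_prop) _ _) (fun x _ => ?_)
    rw [← sub_mul, abs_mul, abs_of_pos (Real.exp_pos _), ← add_mul]
    refine mul_le_mul_of_nonneg_right ?_ (Real.exp_pos _).le
    calc |x - m| ≤ |x - x₀| + |x₀ - m| := abs_sub_le _ _ _
      _ ≤ |x - x₀| + (x₂ - x₁) := by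
        gcongr
        exact abs_le.2 ⟨by linarith, by linarith⟩
  rw [intervalIntegral.integral_add (Continuous.intervalIntegrable (by fun_prop) _ _)
    (Continuous.intervalIntegrable (by fun_prop) _ _),
    intervalIntegral.integral_const_mul] at hmono
  linarith

/-- If `ψ 0 = 0` and `ψ` is increasing on `[0, x₁]`, then `exp ψ` has mass at least `x₁`. -/
theorem le_integral_exp_of_deriv_nonneg {ψ g : ℝ → ℝ} (hψ : ∀ x, HasDerivAt ψ (g x) x)
    (hψ0 : ψ 0 = 0) {x₁ : ℝ} (hx₁ : 0 ≤ x₁) (hgx₁ : ∀ x ≤ x₁, 0 ≤ g x)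
    (hJ : IntegrableOn (fun x => Real.exp (ψ x)) (Ioi 0)) :
    x₁ ≤ ∫ x in Ioi (0 : ℝ), Real.exp (ψ x) := by
  have hψc : Continuous ψ := continuous_iff_continuousAt.2 fun x => (hψ x).continuousAt
  have hmono : MonotoneOn ψ (Icc 0 x₁) := by
    refine monotoneOn_of_deriv_nonneg (convex_Icc 0 x₁) hψc.continuousOn
      (fun x _ => (hψ x).differentiableAt.differentiableWithinAt) (fun x hx => ?_)
    rw [(hψ x).deriv]
    exact hgx₁ x (interior_subset hx).2
  calc x₁ = ∫ _ in Ioc 0 x₁, (1 : ℝ) := by simp [hx₁]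
    _ ≤ ∫ x in Ioc 0 x₁, Real.exp (ψ x) := by
      refine setIntegral_mono_on (by simp) (hJ.mono_set Ioc_subset_Ioi_self) measurableSet_Ioc
        (fun x hx => Real.one_le_exp ?_)
      rw [← hψ0]
      exact hmono ⟨le_rfl, hx₁⟩ ⟨hx.1.le, hx.2⟩ hx.1.le
    _ ≤ ∫ x in Ioi (0 : ℝ), Real.exp (ψ x) :=
      setIntegral_mono_set hJ (ae_of_all _ fun x => (Real.exp_pos _).le)
        (ae_of_all _ Ioc_subset_Ioi_self)

/-- Quantitative location of `L J₁ / (1 + L J)`, where `J` and `J₁` are the zeroth and first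
moments of `exp ψ` on the half-line. -/
theorem abs_moment_ratio_sub_le {ψ g : ℝ → ℝ} (hψ : ∀ x, HasDerivAt ψ (g x) x)
    (hψ0 : ψ 0 = 0) (hg : Continuous g) (hanti : Antitone g) {x₁ x₂ m B L : ℝ} (hx₁ : 0 < x₁)
    (hm₁ : x₁ ≤ m) (hm₂ : m ≤ x₂) (hB : 0 < B) (hL : 0 < L) (hgx₁ : B ≤ g x₁) (hgx₂ : g x₂ ≤ -B)
    (hJ : IntegrableOn (fun x => Real.exp (ψ x)) (Ioi 0))
    (hJ₁ : IntegrableOn (fun x => x * Real.exp (ψ x)) (Ioi 0)) :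
    |L * (∫ x in Ioi (0 : ℝ), x * Real.exp (ψ x)) /
        (1 + L * ∫ x in Ioi (0 : ℝ), Real.exp (ψ x)) - m| ≤
      2 * (x₂ - x₁) + 1 / B + m / (L * x₁) := by
  have hmoment := abs_integral_id_mul_exp_sub_le hψ hg hanti hx₁.le hm₁ hm₂ hB hgx₁ hgx₂ hJ hJ₁
  have hmass := le_integral_exp_of_deriv_nonneg hψ hψ0 hx₁.le
    (fun x hx => hB.le.trans (hgx₁.trans (hanti hx))) hJ
  set J := ∫ x in Ioi (0 : ℝ), Real.exp (ψ x)
  set J₁ := ∫ x in Ioi (0 : ℝ), x * Real.exp (ψ x)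
  have hJpos : 0 < J := hx₁.trans_le hmass
  have hden : 0 < 1 + L * J := by positivity
  have hm : 0 < m := hx₁.trans_le hm₁
  have hC : 0 ≤ 2 * (x₂ - x₁) + 1 / B := by
    have : 0 < 1 / B := by positivity
    linarith
  have hsplit : L * J₁ / (1 + L * J) - m = (L * (J₁ - m * J) - m) / (1 + L * J) := by
    field_simp
    ring
  rw [hsplit, abs_div, abs_of_pos hden, div_le_iff₀ hden]
  have hnum : |L * (J₁ - m * J) - m| ≤ L * ((2 * (x₂ - x₁) + 1 / B) * J) + m := by
    refine (abs_sub _ _).trans ?_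
    rw [abs_mul, abs_of_pos hL, abs_of_pos hm]
    gcongr
  have hlast : m ≤ m / (L * x₁) * (1 + L * J) := by
    rw [div_mul_eq_mul_div, le_div_iff₀ (by positivity)]
    have := mul_le_mul_of_nonneg_left hmass hL.le
    nlinarith
  nlinarith

/-- Leading-order behaviour at `0⁺` of a function whose first `k - 1` derivatives vanish. -/
theorem tendsto_div_pow_nhdsGT_zero {F : ℝ → ℝ} {k : ℕ} (hF : ContDiffOn ℝ k F (Ici 0))
    (hderivs : ∀ j < k, iteratedDerivWithin j F (Ici 0) 0 = 0) :
    Tendsto (fun x => F x / x ^ k) (𝓝[>] 0)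
      (𝓝 (iteratedDerivWithin k F (Ici 0) 0 / k.factorial)) := by
  have h := (taylor_isLittleO (convex_Ici 0) self_mem_Ici hF).tendsto_div_nhds_zero.mono_left
    (nhdsWithin_mono 0 Ioi_subset_Ici_self)
  have h' := h.add_const (iteratedDerivWithin k F (Ici 0) 0 / k.factorial)
  rw [zero_add] at h'
  refine h'.congr' ?_
  filter_upwards [self_mem_nhdsWithin] with x hx
  have hx' : (x : ℝ) ^ k ≠ 0 := pow_ne_zero _ (ne_of_gt hx)
  rw [taylor_within_apply, Finset.sum_range_succ, Finset.sum_eq_zero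
    (fun j hj => by rw [hderivs j (Finset.mem_range.1 hj), smul_zero])]
  simp only [sub_zero, zero_add, smul_eq_mul]
  field_simp
  ring

theorem tendsto_rpow_nhdsGT_zero_s6 {r : ℝ} (hr : 0 < r) :
    Tendsto (fun x : ℝ => x ^ r) (𝓝[>] 0) (𝓝[>] 0) := by
  refine tendsto_nhdsWithin_iff.2 ⟨?_, ?_⟩
  · have h := (Real.continuousAt_rpow_const 0 r (Or.inr hr.le)).tendsto
    rw [Real.zero_rpow hr.ne'] at h
    exact h.mono_left nhdsWithin_le_nhds
  · filter_upwards [self_mem_nhdsWithin] with x hx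
    exact Real.rpow_pos_of_pos hx r

/-- Rescaled overload: at the scale `α ^ (γ / k)` the loss probability `F` is of order `α ^ γ`. -/
theorem tendsto_scaled_drift {F : ℝ → ℝ} {k : ℕ} (hk : 1 ≤ k) {a c γ y : ℝ} (hγ : 0 < γ)
    (hF : Tendsto (fun x => F x / x ^ k) (𝓝[>] 0) (𝓝 a)) (hy : 0 < y) :
    Tendsto (fun α : ℝ => c - (1 + c * α ^ γ) * (F (α ^ (γ / k) * y) / α ^ γ)) (𝓝[>] 0)
      (𝓝 (c - a * y ^ k)) := by
  have hk' : (0 : ℝ) < k := by exact_mod_cast hk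
  have hscale : Tendsto (fun α : ℝ => α ^ (γ / k) * y) (𝓝[>] 0) (𝓝[>] 0) := by
    have h := tendsto_nhdsWithin_iff.1 (tendsto_rpow_nhdsGT_zero_s6 (div_pos hγ hk'))
    refine tendsto_nhdsWithin_iff.2 ⟨by simpa using h.1.mul_const y, ?_⟩
    filter_upwards [h.2] with α hα
    exact mul_pos hα hy
  have hq : Tendsto (fun α : ℝ => F (α ^ (γ / k) * y) / α ^ γ) (𝓝[>] 0) (𝓝 (a * y ^ k)) := by
    refine ((hF.comp hscale).mul_const (y ^ k)).congr' ?_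
    filter_upwards [self_mem_nhdsWithin] with α hα
    have hα0 : 0 < α := hα
    have hpow : (α ^ (γ / k)) ^ k = α ^ γ := by
      rw [← Real.rpow_natCast, ← Real.rpow_mul hα0.le, div_mul_cancel₀ _ hk'.ne']
    have := Real.rpow_pos_of_pos hα0 γ
    simp only [Function.comp_apply, mul_pow, hpow]
    field_simp
  have hρ : Tendsto (fun α : ℝ => 1 + c * α ^ γ) (𝓝[>] 0) (𝓝 1) := by
    have h := (tendsto_nhdsWithin_iff.1 (tendsto_rpow_nhdsGT_zero_s6 hγ)).1
    simpa using (h.const_mul c).const_add 1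
  simpa using (hρ.mul hq).const_sub c

/-- overloaded heavy-traffic limit for the exact `M/M/1+GI` mean
virtual waiting time: if `c > 0` and `0 < γ < h = k/(k+1)` then
`α^{1-γ/k} E(α) → (c k! / F^{(k)}(0))^{1/k}`. -/
theorem mm1gi_heavy_traffic_overloaded
    (k : ℕ) (hk : 1 ≤ k)
    (F : ℝ → ℝ)
    (hF_mono : Monotone F)
    (hF_zero : ∀ x ≤ (0 : ℝ), F x = 0)
    (hF_range : ∀ x, 0 ≤ x → 0 ≤ F x ∧ F x < 1)
    (hF_lim : Tendsto F atTop (𝓝 1))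
    (hF_smooth : ContDiffOn ℝ k F (Set.Ici 0))
    (hF_derivs : ∀ j < k, iteratedDerivWithin j F (Set.Ici 0) 0 = 0)
    (hF_k : 0 < iteratedDerivWithin k F (Set.Ici 0) 0)
    (μ γ c : ℝ) (hμ : 0 < μ) (hγ : 0 < γ)
    (hc : 0 < c) (hγh : γ < (k : ℝ) / (k + 1))
    (hJ : ∀ᶠ α in 𝓝[>] (0 : ℝ), IntegrableOn
      (fun x : ℝ => Real.exp ((1 + c * α ^ γ) * μ *
        (∫ u in (0 : ℝ)..x, (1 - F (α * u))) - μ * x)) (Set.Ioi 0))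
    (hJ1 : ∀ᶠ α in 𝓝[>] (0 : ℝ), IntegrableOn
      (fun x : ℝ => x * Real.exp ((1 + c * α ^ γ) * μ *
        (∫ u in (0 : ℝ)..x, (1 - F (α * u))) - μ * x)) (Set.Ioi 0)) :
    Tendsto (fun α : ℝ => α ^ (1 - γ / (k : ℝ)) * Emean F μ c γ α)
      (𝓝[>] (0 : ℝ))
      (𝓝 ((c * (Nat.factorial k) / iteratedDerivWithin k F (Set.Ici 0) 0)
        ^ ((1 : ℝ) / (k : ℝ)))) := by
  have hk' : (0 : ℝ) < k := by exact_mod_cast hk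
  set a : ℝ := iteratedDerivWithin k F (Set.Ici 0) 0 / k.factorial with ha_def
  have ha : 0 < a := by positivity
  have hca : c * (Nat.factorial k) / iteratedDerivWithin k F (Set.Ici 0) 0 = c / a := by
    rw [ha_def]; field_simp
  rw [hca]
  set p : ℝ := (c / a) ^ ((1 : ℝ) / (k : ℝ)) with hp_def
  have hp : 0 < p := by positivity
  have hpk : a * p ^ k = c := by
    rw [hp_def, one_div, Real.rpow_inv_natCast_pow (by positivity) (by omega)]
    field_simp
  have hF_cont : Continuous F := by
    rw [← continuousOn_univ, ← Iic_union_Ici (a := (0 : ℝ))]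
    exact (continuousOn_const.congr hF_zero).union_of_isClosed hF_smooth.continuousOn
      isClosed_Iic isClosed_Ici
  have hF_asymp := tendsto_div_pow_nhdsGT_zero hF_smooth hF_derivs
  have hγk : γ / k + γ < 1 := by
    rw [lt_div_iff₀ (by positivity)] at hγh
    have : γ / k + γ = γ * (k + 1) / k := by field_simp; ring
    rw [this, div_lt_one hk']
    exact hγh
  have ht : Tendsto (fun α : ℝ => α ^ (1 - γ / (k : ℝ))) (𝓝[>] 0) (𝓝 0) :=
    (tendsto_rpow_nhdsGT_zero_s6 (by linarith)).mono_right nhdsWithin_le_nhds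
  have htγ : Tendsto (fun α : ℝ => α ^ (1 - γ / (k : ℝ) - γ)) (𝓝[>] 0) (𝓝 0) :=
    (tendsto_rpow_nhdsGT_zero_s6 (by linarith)).mono_right nhdsWithin_le_nhds
  rw [Metric.tendsto_nhds]
  intro ε hε
  set δ : ℝ := min (p / 2) (ε / 8) with hδ_def
  have hδ : 0 < δ := by positivity
  have hδp : δ ≤ p / 2 := min_le_left _ _
  have hδε : δ ≤ ε / 8 := min_le_right _ _
  have hlow : a * (p - δ) ^ k < c := by
    rw [← hpk]
    exact mul_lt_mul_of_pos_left (pow_lt_pow_left₀ (by linarith) (by linarith) (by omega)) ha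
  have hhigh : c < a * (p + δ) ^ k := by
    rw [← hpk]
    exact mul_lt_mul_of_pos_left (pow_lt_pow_left₀ (by linarith) hp.le (by omega)) ha
  obtain ⟨η, hη, hη₁, hη₂⟩ : ∃ η : ℝ, 0 < η ∧ η < c - a * (p - δ) ^ k ∧
      c - a * (p + δ) ^ k < -η := by
    refine ⟨min (c - a * (p - δ) ^ k) (a * (p + δ) ^ k - c) / 2, ?_, ?_, ?_⟩
    · have : 0 < min (c - a * (p - δ) ^ k) (a * (p + δ) ^ k - c) :=
        lt_min (by linarith) (by linarith)
      linarith
    · have := min_le_left (c - a * (p - δ) ^ k) (a * (p + δ) ^ k - c)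
      linarith
    · have := min_le_right (c - a * (p - δ) ^ k) (a * (p + δ) ^ k - c)
      linarith
  have hsmall : Tendsto (fun α : ℝ => 4 * δ + α ^ (1 - γ / (k : ℝ) - γ) / (μ * η) +
      2 * α ^ (1 - γ / (k : ℝ)) / μ) (𝓝[>] 0) (𝓝 (4 * δ)) := by
    simpa using ((htγ.div_const (μ * η)).const_add (4 * δ)).add ((ht.const_mul 2).div_const μ)
  filter_upwards [hJ, hJ1, self_mem_nhdsWithin,
    (tendsto_scaled_drift (c := c) hk hγ hF_asymp
      (show 0 < p - δ by linarith)).eventually_const_lt hη₁,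
    (tendsto_scaled_drift (c := c) hk hγ hF_asymp
      (show 0 < p + δ by linarith)).eventually_lt_const hη₂,
    hsmall.eventually_lt_const (show 4 * δ < ε by linarith)]
    with α hJα hJ1α hα hdrift₁ hdrift₂ hεα
  have hα0 : 0 < α := hα
  have hαγ : 0 < α ^ γ := Real.rpow_pos_of_pos hα0 γ
  set t : ℝ := α ^ (1 - γ / (k : ℝ)) with ht_def
  have htpos : 0 < t := Real.rpow_pos_of_pos hα0 _
  have hαt : ∀ y, α * (y / t) = α ^ (γ / (k : ℝ)) * y := by
    intro y
    have : α = α ^ (γ / (k : ℝ)) * t := by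
      rw [ht_def, ← Real.rpow_add hα0, add_sub_cancel, Real.rpow_one]
    nth_rewrite 1 [this]
    field_simp
  have hαtγ : α ^ (1 - γ / (k : ℝ) - γ) = t / α ^ γ := Real.rpow_sub hα0 _ _
  set L : ℝ := (1 + c * α ^ γ) * μ with hL_def
  have hL : 0 < L := by positivity
  have hμL : μ ≤ L := by
    have : 0 < c * α ^ γ * μ := by positivity
    rw [hL_def]; linarith
  have hderiv : ∀ x, HasDerivAt (fun x => L * (∫ u in (0 : ℝ)..x, (1 - F (α * u))) - μ * x)
      (L * (1 - F (α * x)) - μ) x := by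
    intro x
    have hcont : Continuous fun u => 1 - F (α * u) := by fun_prop
    have h := (hcont.integral_hasStrictDerivAt 0 x).hasDerivAt
    simpa using (h.const_mul L).fun_sub ((hasDerivAt_id x).const_mul μ)
  have hdrift : ∀ y, L * (1 - F (α * (y / t))) - μ =
      μ * α ^ γ * (c - (1 + c * α ^ γ) * (F (α ^ (γ / (k : ℝ)) * y) / α ^ γ)) := by
    intro y
    rw [hαt, hL_def]
    field_simp
    ring
  have hanti : Antitone fun x => L * (1 - F (α * x)) - μ := by
    intro x y hxy
    have := hF_mono (mul_le_mul_of_nonneg_left hxy hα0.le)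
    dsimp only
    gcongr
  have hest := abs_moment_ratio_sub_le (x₁ := (p - δ) / t) (x₂ := (p + δ) / t) (m := p / t)
    (B := μ * α ^ γ * η) (L := L) hderiv (by simp) (by fun_prop) hanti
    (div_pos (by linarith) htpos) (by gcongr; linarith) (by gcongr; linarith) (by positivity) hL
    (by rw [hdrift]; gcongr)
    (by rw [hdrift, ← mul_neg]; gcongr) hJα hJ1α
  change |Emean F μ c γ α - p / t| ≤ _ at hest
  have hscaled : |t * Emean F μ c γ α - p| = t * |Emean F μ c γ α - p / t| := by
    rw [← abs_of_pos htpos, ← abs_mul, abs_of_pos htpos]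
    congr 1
    field_simp
  have hratio : p / t / (L * ((p - δ) / t)) ≤ 2 / μ := by
    have : p / t / (L * ((p - δ) / t)) = p / (L * (p - δ)) := by
      have : p - δ ≠ 0 := by linarith
      field_simp
    rw [this, div_le_div_iff₀ (mul_pos hL (by linarith)) hμ]
    have h1 : μ * (p - δ) ≤ L * (p - δ) := mul_le_mul_of_nonneg_right hμL (by linarith)
    nlinarith
  rw [Real.dist_eq, hscaled]
  calc t * |Emean F μ c γ α - p / t|
      ≤ t * (2 * ((p + δ) / t - (p - δ) / t) + 1 / (μ * α ^ γ * η) + 2 / μ) := by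
        gcongr
        linarith
    _ = 4 * δ + α ^ (1 - γ / (k : ℝ) - γ) / (μ * η) + 2 * t / μ := by
        rw [hαtγ]
        field_simp
        ring
    _ < ε := hεα
end

section
/- For every integer k ≥ 1 and every real a > 0, lim_{c → −∞} b(c) = √2, where ψ(c) = [∫_0^∞ x·exp(cx − a·x^{k+1}/(k+1)!) dx]/[∫_0^∞ exp(cx − a·x^{k+1}/(k+1)!) dx] and b(c) = √(2·|−c·ψ(c) + (a/k!)·ψ(c)^{k+1}|). -/
open Filter Set Topology MeasureTheory

/-- The heavy-traffic limiting constant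
`ψ(c) = ∫_0^∞ x e^{c x - a x^{k+1}/(k+1)!} dx / ∫_0^∞ e^{c x - a x^{k+1}/(k+1)!} dx`. -/
noncomputable def psiHT (k : ℕ) (a c : ℝ) : ℝ :=
  (∫ x in Set.Ioi (0 : ℝ),
      x * Real.exp (c * x - a * x ^ (k + 1) / (Nat.factorial (k + 1)))) /
  (∫ x in Set.Ioi (0 : ℝ),
      Real.exp (c * x - a * x ^ (k + 1) / (Nat.factorial (k + 1))))

/-- Rescaling `x = y / (-c)` in the moment integrals that define `psiHT`. -/
theorem integral_pow_mul_exp_rescale (k m : ℕ) (a : ℝ) {c : ℝ} (hc : c < 0) :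
    ∫ x in Ioi (0 : ℝ), x ^ m * Real.exp (c * x - a * x ^ (k + 1) / (Nat.factorial (k + 1))) =
      ((-c) ^ (m + 1))⁻¹ * ∫ y in Ioi (0 : ℝ),
        y ^ m * Real.exp (-y - a * (y / (-c)) ^ (k + 1) / (Nat.factorial (k + 1))) := by
  have ht : 0 < -c := neg_pos.mpr hc
  have h := integral_comp_mul_left_Ioi (fun y : ℝ =>
    y ^ m * Real.exp (-y - a * (y / (-c)) ^ (k + 1) / (Nat.factorial (k + 1)))) 0 ht
  rw [mul_zero, smul_eq_mul] at h
  rw [pow_succ, mul_inv, mul_assoc, ← h, ← integral_const_mul]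
  congr 1
  ext x
  rw [mul_div_cancel_left₀ x ht.ne', mul_pow, mul_assoc,
    inv_mul_cancel_left₀ (pow_ne_zero m ht.ne'), neg_mul, neg_neg]

/-- The rescaled moment integrals converge to the moments of the exponential distribution. -/
theorem tendsto_integral_pow_mul_exp_rescaled (k m : ℕ) {a : ℝ} (ha : 0 < a) :
    Tendsto (fun c : ℝ => ∫ y in Ioi (0 : ℝ),
        y ^ m * Real.exp (-y - a * (y / (-c)) ^ (k + 1) / (Nat.factorial (k + 1))))
      atBot (𝓝 (Nat.factorial m)) := by
  have h_integrable : IntegrableOn (fun y : ℝ => y ^ m * Real.exp (-y)) (Ioi 0) := by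
    have h := Real.GammaIntegral_convergent (s := m + 1) (by positivity)
    simpa [mul_comm] using h
  have hval : ∫ y in Ioi (0 : ℝ), y ^ m * Real.exp (-y) = Nat.factorial m := by
    rw [← Real.Gamma_nat_eq_factorial, Real.Gamma_eq_integral (by positivity)]
    simp [mul_comm]
  rw [← hval]
  refine tendsto_integral_filter_of_dominated_convergence
    (fun y : ℝ => y ^ m * Real.exp (-y)) ?_ ?_ h_integrable ?_
  · exact Eventually.of_forall fun c =>
      Continuous.aestronglyMeasurable (by fun_prop)
  · filter_upwards [eventually_lt_atBot 0] with c hc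
    filter_upwards [ae_restrict_mem measurableSet_Ioi] with y hy
    have hy : 0 < y := hy
    have ht : 0 < -c := neg_pos.mpr hc
    rw [Real.norm_of_nonneg (by positivity)]
    gcongr
    exact sub_le_self _ (by positivity)
  · refine Eventually.of_forall fun y => ?_
    have h : Tendsto (fun c : ℝ => y / (-c)) atBot (𝓝 0) :=
      tendsto_const_nhds.div_atTop tendsto_neg_atBot_atTop
    have hlim := ((((h.pow (k + 1)).const_mul a).div_const
      (Nat.factorial (k + 1) : ℝ)).const_sub (-y)).rexp.const_mul (y ^ m)
    simpa using hlim

/-- The mean `psiHT k a c` behaves like `1 / (-c)` as `c → -∞`. -/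
theorem tendsto_neg_mul_psiHT (k : ℕ) {a : ℝ} (ha : 0 < a) :
    Tendsto (fun c : ℝ => (-c) * psiHT k a c) atBot (𝓝 1) := by
  have h := (tendsto_integral_pow_mul_exp_rescaled k 1 ha).div
    (tendsto_integral_pow_mul_exp_rescaled k 0 ha) (by simp)
  simp only [Nat.factorial_one, Nat.factorial_zero, Nat.cast_one, div_one] at h
  refine h.congr' ?_
  filter_upwards [eventually_lt_atBot 0] with c hc
  have h1 := integral_pow_mul_exp_rescale k 1 a hc
  have h0 := integral_pow_mul_exp_rescale k 0 a hc
  simp only [pow_one, pow_zero, one_mul, zero_add] at h1 h0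
  simp only [Pi.div_apply, pow_one, pow_zero, one_mul]
  rw [psiHT, h1, h0]
  have key (t A B : ℝ) (ht : t ≠ 0) : A / B = t * ((t ^ (1 + 1))⁻¹ * A / (t⁻¹ * B)) := by
    field_simp
  exact key _ _ _ (neg_ne_zero.mpr hc.ne)

theorem tendsto_psiHT_atBot (k : ℕ) {a : ℝ} (ha : 0 < a) :
    Tendsto (psiHT k a) atBot (𝓝 0) := by
  refine ((tendsto_neg_mul_psiHT k ha).div_atTop tendsto_neg_atBot_atTop).congr' ?_
  filter_upwards [eventually_lt_atBot 0] with c hc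
  exact mul_div_cancel_left₀ _ (neg_ne_zero.mpr hc.ne)

/-- the calibrated robustness parameter
`b(c) = √(2 |-c ψ(c) + (a/k!) ψ(c)^{k+1}|)` satisfies `b(c) → √2` as `c → -∞`. -/
theorem calibration_b_tendsto_sqrt_two
    (k : ℕ) (hk : 1 ≤ k) (a : ℝ) (ha : 0 < a) :
    Tendsto (fun c : ℝ =>
        Real.sqrt (2 * |(-c) * psiHT k a c
          + a / (Nat.factorial k) * (psiHT k a c) ^ (k + 1)|))
      atBot (𝓝 (Real.sqrt 2)) := by
  have h := (((tendsto_neg_mul_psiHT k ha).add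
    (((tendsto_psiHT_atBot k ha).pow (k + 1)).const_mul
      (a / (Nat.factorial k)))).abs.const_mul 2).sqrt
  simpa using h
end

section
/- For every integer k ≥ 1 and every real a > 0, lim_{c → −∞} (−c)·ψ(c) = 1, where ψ(c) = [∫_0^∞ x·exp(cx − a·x^{k+1}/(k+1)!) dx]/[∫_0^∞ exp(cx − a·x^{k+1}/(k+1)!) dx]. In particular ψ(c) → 0 as c → −∞, so ψ(c)^{k+1} = o(1). -/
open Filter Set Topology MeasureTheory

/-- Leading-order Watson lemma for the Laplace transform of `x ^ n * g x`. -/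
theorem tendsto_pow_mul_integral_pow_mul_exp_neg_mul (n : ℕ) {g : ℝ → ℝ} {C : ℝ}
    (hg : Continuous g) (hC : ∀ x, 0 < x → |g x| ≤ C) :
    Tendsto (fun s : ℝ => s ^ (n + 1) * ∫ x in Ioi (0 : ℝ), x ^ n * (Real.exp (-(s * x)) * g x))
      atTop (𝓝 (n.factorial * g 0)) := by
  have hgamma : ∫ y in Ioi (0 : ℝ), Real.exp (-y) * y ^ n = n.factorial := by
    rw [← Real.Gamma_nat_eq_factorial, Real.Gamma_eq_integral (by positivity)]
    simp
  have hint : IntegrableOn (fun y : ℝ => Real.exp (-y) * y ^ n) (Ioi 0) := by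
    simpa using Real.GammaIntegral_convergent (s := (n : ℝ) + 1) (by positivity)
  have hlim : Tendsto (fun s : ℝ => ∫ y in Ioi (0 : ℝ), Real.exp (-y) * y ^ n * g (s⁻¹ * y))
      atTop (𝓝 (∫ y in Ioi (0 : ℝ), Real.exp (-y) * y ^ n * g 0)) := by
    refine tendsto_integral_filter_of_dominated_convergence
      (fun y => Real.exp (-y) * y ^ n * C) ?_ ?_ (hint.mul_const C) ?_
    · exact Eventually.of_forall fun s => Continuous.aestronglyMeasurable (by fun_prop)
    · filter_upwards [eventually_gt_atTop 0] with s hs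
      filter_upwards [ae_restrict_mem measurableSet_Ioi] with y hy
      have hy' : 0 < y := hy
      rw [norm_mul, Real.norm_of_nonneg (by positivity), Real.norm_eq_abs]
      exact mul_le_mul_of_nonneg_left (hC _ (by positivity)) (by positivity)
    · refine Eventually.of_forall fun y => Tendsto.const_mul _ ?_
      have h : Tendsto (fun s : ℝ => s⁻¹ * y) atTop (𝓝 0) := by
        simpa using tendsto_inv_atTop_zero.mul_const y
      exact (hg.tendsto 0).comp h
  rw [integral_mul_const, hgamma] at hlim
  refine hlim.congr' ?_
  filter_upwards [eventually_gt_atTop 0] with s hs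
  have hsub := integral_comp_mul_left_Ioi
    (fun y => Real.exp (-y) * y ^ n * g (s⁻¹ * y)) 0 hs
  rw [mul_zero, smul_eq_mul, eq_inv_mul_iff_mul_eq₀ hs.ne'] at hsub
  rw [← hsub, pow_succ', mul_assoc, ← integral_const_mul (s ^ n)]
  congr 2 with x
  rw [inv_mul_cancel_left₀ hs.ne', mul_pow]
  ring

/-- `(-c) ψ(c) → 1` as `c → -∞`; in particular `ψ(c) → 0`,
so `ψ(c)^{k+1} = o(1)`. -/
theorem psi_asymptotics_atBot
    (k : ℕ) (hk : 1 ≤ k) (a : ℝ) (ha : 0 < a) :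
    Tendsto (fun c : ℝ => (-c) * psiHT k a c) atBot (𝓝 1) ∧
    Tendsto (fun c : ℝ => psiHT k a c) atBot (𝓝 0) := by
  have hlim (n : ℕ) := (tendsto_pow_mul_integral_pow_mul_exp_neg_mul n (C := 1)
    (g := fun x => Real.exp (-(a * x ^ (k + 1) / (Nat.factorial (k + 1)))))
    (by fun_prop) (fun x hx => by
      rw [Real.abs_exp, Real.exp_le_one_iff, neg_nonpos]
      positivity)).comp tendsto_neg_atBot_atTop
  have hmain : Tendsto (fun c : ℝ => (-c) * psiHT k a c) atBot (𝓝 1) := by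
    have hdiv := (hlim 1).div (hlim 0) (by simp)
    simp only [Nat.factorial, ne_eq, Nat.succ_ne_zero, not_false_eq_true, zero_pow, mul_zero,
      zero_div, neg_zero, Real.exp_zero, Nat.cast_one, mul_one, div_one] at hdiv
    refine hdiv.congr' ?_
    filter_upwards [eventually_lt_atBot 0] with c hc
    have hc' : -c ≠ 0 := (neg_pos.mpr hc).ne'
    simp only [Pi.div_apply, Function.comp_apply, psiHT, ← Real.exp_add, neg_mul, neg_neg,
      ← sub_eq_add_neg, pow_one, pow_zero, one_mul, zero_add, Nat.factorial]
    rw [pow_succ, pow_one, mul_assoc, ← neg_mul, ← neg_mul, mul_div_mul_left _ _ hc',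
      mul_div_assoc]
  refine ⟨hmain, ?_⟩
  have hzero := (tendsto_inv_atTop_zero.comp tendsto_neg_atBot_atTop).mul hmain
  rw [zero_mul] at hzero
  refine hzero.congr' ?_
  filter_upwards [eventually_lt_atBot 0] with c hc
  exact inv_mul_cancel_left₀ (neg_pos.mpr hc).ne' _
end

section
/- Fix T > 0, β > 0 and an integer k ≥ 1, and set g(x) = −β·x^k for x ≥ 0. For every continuous function y : [0,T] → ℝ with y(0) ≥ 0 there exists a unique pair (x, ℓ) of continuous functions on [0,T] such that: (i) x(t) = y(t) + ∫_0^t g(x(s)) ds + ℓ(t) for all t ∈ [0,T]; (ii) x(t) ≥ 0 for all t ∈ [0,T]; (iii) ℓ is nondecreasing with ℓ(0) = 0; and (iv) ℓ is constant on every closed subinterval of [0,T] on which x is strictly positive. -/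
open Filter Set Topology MeasureTheory

/-- `(x, ℓ)` solves the reflected (Skorokhod) integral equation on `[0,T]` with input
`y` and polynomial drift `g(x) = -β x^k`:
(i) `x(t) = y(t) + ∫_0^t g(x(s)) ds + ℓ(t)`;
(ii) `x ≥ 0`;
(iii) `ℓ` is nondecreasing with `ℓ(0) = 0`;
(iv) `ℓ` is constant on every closed subinterval of `[0,T]` on which `x > 0`. -/
def IsReflectedSolution (T β : ℝ) (k : ℕ) (y x ℓ : ℝ → ℝ) : Prop :=
  ContinuousOn x (Set.Icc 0 T) ∧
  ContinuousOn ℓ (Set.Icc 0 T) ∧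
  (∀ t ∈ Set.Icc (0 : ℝ) T,
    x t = y t + (∫ s in (0 : ℝ)..t, -β * (x s) ^ k) + ℓ t) ∧
  (∀ t ∈ Set.Icc (0 : ℝ) T, 0 ≤ x t) ∧
  MonotoneOn ℓ (Set.Icc 0 T) ∧
  ℓ 0 = 0 ∧
  (∀ s t : ℝ, 0 ≤ s → s ≤ t → t ≤ T →
    (∀ r ∈ Set.Icc s t, 0 < x r) → ℓ t = ℓ s)

/-- The Skorokhod regulator of a path `u` started at time `0`:
for `0 ≤ t` this is `sup_{0 ≤ s ≤ t} max (-u s) 0`. -/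
noncomputable def skorokhodRegulator (u : ℝ → ℝ) (t : ℝ) : ℝ :=
  sSup ((fun θ : ℝ => max (-u (θ * t)) 0) '' Icc 0 1)

namespace skorokhodRegulator

variable {u v : ℝ → ℝ} {s t : ℝ}

protected theorem continuous (hu : Continuous u) : Continuous (skorokhodRegulator u) :=
  isCompact_Icc.continuous_sSup (f := fun t θ : ℝ => max (-u (θ * t)) 0) (by fun_prop)

theorem max_neg_le (hu : Continuous u) (hs : 0 ≤ s) (hst : s ≤ t) :
    max (-u s) 0 ≤ skorokhodRegulator u t := by
  have hcont : ContinuousOn (fun θ : ℝ => max (-u (θ * t)) 0) (Icc 0 1) := by fun_prop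
  refine le_csSup (isCompact_Icc.image_of_continuousOn hcont).bddAbove ?_
  rcases (hs.trans hst).eq_or_lt with ht | ht
  · refine ⟨0, by simp, ?_⟩
    have : s = 0 := le_antisymm (hst.trans ht.ge) hs
    simp [this]
  · exact ⟨s / t, ⟨by positivity, (div_le_one ht).2 hst⟩, by simp [div_mul_cancel₀ s ht.ne']⟩

protected theorem exists_eq (hu : Continuous u) (ht : 0 ≤ t) :
    ∃ s ∈ Icc 0 t, skorokhodRegulator u t = max (-u s) 0 := by
  have hcont : ContinuousOn (fun θ : ℝ => max (-u (θ * t)) 0) (Icc 0 1) := by fun_prop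
  obtain ⟨θ, hθ, h⟩ := isCompact_Icc.exists_sSup_image_eq (nonempty_Icc.2 zero_le_one) hcont
  exact ⟨θ * t, ⟨mul_nonneg hθ.1 ht, mul_le_of_le_one_left ht hθ.2⟩, h⟩

protected theorem nonneg (hu : Continuous u) (ht : 0 ≤ t) : 0 ≤ skorokhodRegulator u t :=
  (le_max_right _ _).trans (max_neg_le hu ht le_rfl)

protected theorem add_nonneg (hu : Continuous u) (ht : 0 ≤ t) : 0 ≤ u t + skorokhodRegulator u t := by
  linarith [(le_max_left _ _).trans (max_neg_le hu ht le_rfl)]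

theorem mono (hu : Continuous u) (hs : 0 ≤ s) (hst : s ≤ t) :
    skorokhodRegulator u s ≤ skorokhodRegulator u t := by
  obtain ⟨r, hr, h⟩ := skorokhodRegulator.exists_eq hu hs
  exact h.trans_le (max_neg_le hu hr.1 (hr.2.trans hst))

protected theorem zero (hu : 0 ≤ u 0) : skorokhodRegulator u 0 = 0 := by
  have : (Icc (0 : ℝ) 1).Nonempty := nonempty_Icc.2 zero_le_one
  simp [skorokhodRegulator, this.image_const, hu]

theorem eq_of_forall_pos (hu : Continuous u) (hs : 0 ≤ s) (hst : s ≤ t)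
    (hpos : ∀ r ∈ Icc s t, 0 < u r + skorokhodRegulator u r) :
    skorokhodRegulator u t = skorokhodRegulator u s := by
  refine le_antisymm ?_ (mono hu hs hst)
  obtain ⟨r, hr, h⟩ := skorokhodRegulator.exists_eq hu (hs.trans hst)
  rcases le_total r s with hrs | hsr
  · exact h.trans_le (max_neg_le hu hr.1 hrs)
  · have hr_pos := hpos r ⟨hsr, hr.2⟩
    have hr_mono := mono hu hr.1 hr.2
    rcases max_choice (-u r) 0 with hmax | hmax <;> rw [hmax] at h
    · linarith
    · exact h.trans_le (skorokhodRegulator.nonneg hu hs)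

theorem le_add_of_forall_abs_sub_le (hu : Continuous u) (hv : Continuous v) {c : ℝ} (ht : 0 ≤ t)
    (h : ∀ s ∈ Icc 0 t, |u s - v s| ≤ c) :
    skorokhodRegulator u t ≤ skorokhodRegulator v t + c := by
  obtain ⟨r, hr, hr_eq⟩ := skorokhodRegulator.exists_eq hu ht
  have hv_le := max_neg_le hv hr.1 hr.2
  have hle := abs_le.1 (h r hr)
  rw [hr_eq]
  refine max_le ?_ ?_
  · linarith [le_max_left (-v r) 0]
  · linarith [le_max_right (-v r) 0]

protected theorem abs_sub_le (hu : Continuous u) (hv : Continuous v) {c : ℝ} (ht : 0 ≤ t)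
    (h : ∀ s ∈ Icc 0 t, |u s - v s| ≤ c) :
    |skorokhodRegulator u t - skorokhodRegulator v t| ≤ c := by
  have huv := le_add_of_forall_abs_sub_le hu hv ht h
  have hvu := le_add_of_forall_abs_sub_le hv hu ht fun s hs => abs_sub_comm (u s) (v s) ▸ h s hs
  exact abs_le.2 ⟨by linarith, by linarith⟩

end skorokhodRegulator

/-- The Picard operator of the equation `u t = y t + ∫ s in 0..t, h (Γ u s)`, where
`Γ u = u + skorokhodRegulator u` is the Skorokhod reflection map. -/
noncomputable def reflectedPicard {T : ℝ} (hT : 0 ≤ T) (h y : C(ℝ, ℝ)) (u : C(Icc 0 T, ℝ)) :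
    C(Icc 0 T, ℝ) where
  toFun t := y t + ∫ s in (0 : ℝ)..t,
    h (IccExtend hT u s + skorokhodRegulator (IccExtend hT u) s)
  continuous_toFun := by
    have hu : Continuous (IccExtend hT u) := u.continuous.Icc_extend'
    have hR := skorokhodRegulator.continuous hu
    have hint : Continuous fun s => h (IccExtend hT u s + skorokhodRegulator (IccExtend hT u) s) :=
      h.continuous.comp (hu.add hR)
    have hprim := intervalIntegral.continuous_primitive (μ := volume)
      (fun a b => hint.intervalIntegrable a b) 0
    exact (y.continuous.comp continuous_subtype_val).add (hprim.comp continuous_subtype_val)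

theorem abs_iterate_reflectedPicard_sub_le {T : ℝ} (hT : 0 ≤ T) {h : C(ℝ, ℝ)} (y : C(ℝ, ℝ))
    {L : ℝ} (hL : 0 ≤ L) (hLip : ∀ a b, |h a - h b| ≤ L * |a - b|) (u v : C(Icc 0 T, ℝ))
    (n : ℕ) (t : Icc 0 T) :
    |(reflectedPicard hT h y)^[n] u t - (reflectedPicard hT h y)^[n] v t| ≤
      (2 * L * t) ^ n / n.factorial * dist u v := by
  induction n generalizing t with
  | zero => simpa [Real.dist_eq] using ContinuousMap.dist_apply_le_dist (f := u) (g := v) t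
  | succ n ih =>
    rw [Function.iterate_succ_apply', Function.iterate_succ_apply']
    set p := (reflectedPicard hT h y)^[n] u
    set q := (reflectedPicard hT h y)^[n] v
    have hp : Continuous (IccExtend hT p) := p.continuous.Icc_extend'
    have hq : Continuous (IccExtend hT q) := q.continuous.Icc_extend'
    have hp_int : Continuous fun s =>
        h (IccExtend hT p s + skorokhodRegulator (IccExtend hT p) s) :=
      h.continuous.comp (hp.add (skorokhodRegulator.continuous hp))
    have hq_int : Continuous fun s =>
        h (IccExtend hT q s + skorokhodRegulator (IccExtend hT q) s) :=
      h.continuous.comp (hq.add (skorokhodRegulator.continuous hq))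
    set C := dist u v
    have hC : 0 ≤ C := dist_nonneg
    have hbound : ∀ s ∈ Ioc (0 : ℝ) t,
        ‖h (IccExtend hT p s + skorokhodRegulator (IccExtend hT p) s) -
          h (IccExtend hT q s + skorokhodRegulator (IccExtend hT q) s)‖ ≤
        (2 * L) ^ (n + 1) / n.factorial * C * s ^ n := by
      intro s hs
      have hpq : ∀ r ∈ Icc 0 s, |IccExtend hT p r - IccExtend hT q r| ≤
          (2 * L * s) ^ n / n.factorial * C := by
        intro r hr
        have hrT : r ∈ Icc 0 T := ⟨hr.1, hr.2.trans (hs.2.trans t.2.2)⟩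
        rw [IccExtend_of_mem hT _ hrT, IccExtend_of_mem hT _ hrT]
        refine (ih ⟨r, hrT⟩).trans ?_
        have hr0 := hr.1
        have hrs := hr.2
        dsimp only
        gcongr
      have hreg := skorokhodRegulator.abs_sub_le hp hq hs.1.le hpq
      have hs_diff := hpq s ⟨hs.1.le, le_rfl⟩
      rw [Real.norm_eq_abs]
      calc _ ≤ L * |_ - _| := hLip _ _
        _ ≤ L * (2 * ((2 * L * s) ^ n / n.factorial * C)) := by
          gcongr
          rw [add_sub_add_comm, two_mul]
          exact (abs_add_le _ _).trans (add_le_add hs_diff hreg)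
        _ = _ := by rw [mul_pow]; ring
    have hmain := intervalIntegral.norm_integral_le_of_norm_le t.2.1
      (ae_of_all volume hbound) (Continuous.intervalIntegrable (by fun_prop) _ _)
    rw [intervalIntegral.integral_sub (hp_int.intervalIntegrable _ _)
      (hq_int.intervalIntegrable _ _), intervalIntegral.integral_const_mul, integral_pow,
      Real.norm_eq_abs] at hmain
    have heq : reflectedPicard hT h y p t - reflectedPicard hT h y q t =
        (∫ s in (0 : ℝ)..t, h (IccExtend hT p s + skorokhodRegulator (IccExtend hT p) s)) -
        ∫ s in (0 : ℝ)..t, h (IccExtend hT q s + skorokhodRegulator (IccExtend hT q) s) :=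
      add_sub_add_left_eq_sub _ _ _
    rw [heq]
    refine hmain.trans_eq ?_
    rw [Nat.factorial_succ, mul_pow _ (t : ℝ)]
    push_cast
    field_simp
    simp

/-- The reflected integral equation with a Lipschitz drift `h` has a solution, written in terms of
the free path `u`. -/
theorem exists_reflected_free_path {T : ℝ} (hT : 0 ≤ T) {h : C(ℝ, ℝ)} (y : C(ℝ, ℝ))
    {L : ℝ} (hL : 0 ≤ L) (hLip : ∀ a b, |h a - h b| ≤ L * |a - b|) :
    ∃ u : ℝ → ℝ, Continuous u ∧ ∀ t ∈ Icc 0 T,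
      u t = y t + ∫ s in (0 : ℝ)..t, h (u s + skorokhodRegulator u s) := by
  obtain ⟨n, hn⟩ := ((FloorSemiring.tendsto_pow_div_factorial_atTop (2 * L * T)).eventually_lt_const
    zero_lt_one).exists
  have hnonneg : 0 ≤ (2 * L * T) ^ n / n.factorial := by positivity
  have hcontr : ContractingWith ⟨_, hnonneg⟩ (reflectedPicard hT h y)^[n] := by
    refine ⟨hn, LipschitzWith.of_dist_le_mul fun u v => ?_⟩
    refine (ContinuousMap.dist_le (by positivity)).2 fun t => ?_
    refine (abs_iterate_reflectedPicard_sub_le hT y hL hLip u v n t).trans ?_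
    have ht0 := t.2.1
    have htT := t.2.2
    change _ ≤ (2 * L * T) ^ n / n.factorial * dist u v
    gcongr
  set w := hcontr.fixedPoint
  have hw : reflectedPicard hT h y w = w := hcontr.isFixedPt_fixedPoint_iterate
  refine ⟨IccExtend hT w, w.continuous.Icc_extend', fun t ht => ?_⟩
  rw [IccExtend_of_mem hT _ ht]
  exact (DFunLike.congr_fun hw ⟨t, ht⟩).symm

theorem abs_clamp_pow_sub_le {M : ℝ} (hM : 0 ≤ M) (k : ℕ) (a b : ℝ) :
    |min (max a 0) M ^ k - min (max b 0) M ^ k| ≤ k * M ^ (k - 1) * |a - b| := by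
  have hmem : ∀ c : ℝ, |min (max c 0) M| ≤ M := fun c => by
    rw [abs_of_nonneg (le_min (le_max_right _ _) hM)]
    exact min_le_right _ _
  have hdist : |min (max a 0) M - min (max b 0) M| ≤ |a - b| :=
    (abs_min_sub_min_le_max _ _ _ _).trans (by
      simpa using abs_max_sub_max_le_abs a b 0)
  calc _ ≤ _ := abs_pow_sub_pow_le _ _ _
    _ ≤ |a - b| * k * M ^ (k - 1) := by
      gcongr
      exact max_le (hmem a) (hmem b)
    _ = _ := by ring

namespace IsReflectedSolution

variable {T β : ℝ} {k : ℕ} {y x ℓ x' ℓ' : ℝ → ℝ}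

theorem intervalIntegrable_drift (hsol : IsReflectedSolution T β k y x ℓ) {a b : ℝ}
    (ha : a ∈ Icc 0 T) (hb : b ∈ Icc 0 T) :
    IntervalIntegrable (fun s => -β * x s ^ k) volume a b :=
  ((continuousOn_const.mul (hsol.1.pow k)).mono
    (ordConnected_Icc.uIcc_subset ha hb)).intervalIntegrable

protected theorem le (hβ : 0 ≤ β) (hsol : IsReflectedSolution T β k y x ℓ)
    (hsol' : IsReflectedSolution T β k y x' ℓ') {t : ℝ} (ht : t ∈ Icc 0 T) : x t ≤ x' t := by
  have hint {a b : ℝ} := hsol.intervalIntegrable_drift (a := a) (b := b)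
  have hint' {a b : ℝ} := hsol'.intervalIntegrable_drift (a := a) (b := b)
  obtain ⟨hx, hℓ, heq, -, -, hℓ0, hconst⟩ := hsol
  obtain ⟨hx', -, heq', hnonneg', hmono', hℓ0', -⟩ := hsol'
  by_contra! hlt
  have h0 : (0 : ℝ) ∈ Icc 0 T := ⟨le_rfl, ht.1.trans ht.2⟩
  have hsub : Icc 0 t ⊆ Icc 0 T := Icc_subset_Icc_right ht.2
  have hclosed : IsClosed {r ∈ Icc 0 t | x r ≤ x' r} :=
    isClosed_Icc.isClosed_le (hx.mono hsub) (hx'.mono hsub)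
  have hx0 : x 0 ≤ x' 0 := by
    rw [heq 0 h0, heq' 0 h0]
    simp [hℓ0, hℓ0']
  obtain ⟨s, ⟨hs, hs_le⟩, hs_max⟩ :=
    (isCompact_Icc.of_isClosed_subset hclosed (sep_subset _ _)).exists_isGreatest
      ⟨0, ⟨le_rfl, ht.1⟩, hx0⟩
  have hst : s < t := hs.2.lt_of_ne fun h => hlt.not_ge (h ▸ hs_le)
  have habove : ∀ r ∈ Ioc s t, x' r < x r := fun r hr => by
    by_contra! hle
    exact hr.1.not_ge (hs_max ⟨⟨hs.1.trans hr.1.le, hr.2⟩, hle⟩)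
  have hsubst : Icc s t ⊆ Icc 0 T := Icc_subset_Icc hs.1 ht.2
  have hℓ_eq : ℓ s = ℓ t := by
    have hEq : EqOn ℓ (fun _ => ℓ t) (Ioc s t) := fun r hr =>
      (hconst r t (hs.1.trans hr.1.le) hr.2 ht.2 fun q hq =>
        (hnonneg' q (hsubst ⟨hr.1.le.trans hq.1, hq.2⟩)).trans_lt
          (habove q ⟨hr.1.trans_le hq.1, hq.2⟩)).symm
    exact hEq.of_subset_closure (hℓ.mono hsubst) continuousOn_const Ioc_subset_Icc_self
      (closure_Ioc hst.ne).ge ⟨le_rfl, hst.le⟩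
  have hsT := hsub hs
  have hle : (∫ r in s..t, -β * x r ^ k) ≤ ∫ r in s..t, -β * x' r ^ k := by
    refine intervalIntegral.integral_mono_on_of_le_Ioo hst.le (hint hsT ht) (hint' hsT ht)
      fun r hr => ?_
    have := pow_le_pow_left₀ (hnonneg' r (hsubst ⟨hr.1.le, hr.2.le⟩))
      (habove r ⟨hr.1, hr.2.le⟩).le k
    simpa using mul_le_mul_of_nonneg_left this hβ
  have hadd := intervalIntegral.integral_add_adjacent_intervals (hint h0 hsT) (hint hsT ht)
  have hadd' := intervalIntegral.integral_add_adjacent_intervals (hint' h0 hsT) (hint' hsT ht)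
  linarith [heq s hsT, heq t ht, heq' s hsT, heq' t ht, hmono' hsT ht hst.le]

theorem unique (hβ : 0 ≤ β) (hsol : IsReflectedSolution T β k y x ℓ)
    (hsol' : IsReflectedSolution T β k y x' ℓ') {t : ℝ} (ht : t ∈ Icc 0 T) :
    x' t = x t ∧ ℓ' t = ℓ t := by
  have hx : ∀ s ∈ Icc 0 T, x' s = x s := fun s hs =>
    le_antisymm (hsol'.le hβ hsol hs) (hsol.le hβ hsol' hs)
  have hint : (∫ s in (0 : ℝ)..t, -β * x' s ^ k) = ∫ s in (0 : ℝ)..t, -β * x s ^ k := by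
    refine intervalIntegral.integral_congr fun s hs => ?_
    rw [uIcc_of_le ht.1] at hs
    simp only [hx s ⟨hs.1, hs.2.trans ht.2⟩]
  refine ⟨hx t ht, ?_⟩
  linarith [hsol.2.2.1 t ht, hsol'.2.2.1 t ht, hx t ht]

/-- A solution is obtained by truncating the drift to `[0, M]`, where `M` is an a priori upper
bound for `x`. -/
theorem exists_of_continuousOn (hT : 0 ≤ T) (hβ : 0 ≤ β) (k : ℕ)
    (hy : ContinuousOn y (Icc 0 T)) (hy0 : 0 ≤ y 0) :
    ∃ x ℓ : ℝ → ℝ, IsReflectedSolution T β k y x ℓ := by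
  obtain ⟨B, hB⟩ := isCompact_Icc.exists_bound_of_continuousOn hy
  have h0 : (0 : ℝ) ∈ Icc 0 T := ⟨le_rfl, hT⟩
  have hB0 : 0 ≤ B := (norm_nonneg _).trans (hB 0 h0)
  let Y : C(ℝ, ℝ) := ⟨IccExtend hT ((Icc 0 T).domRestrict y), hy.domRestrict.Icc_extend'⟩
  have hY : ∀ t ∈ Icc 0 T, Y t = y t := fun t ht =>
    IccExtend_of_mem hT ((Icc 0 T).domRestrict y) ht
  let h : C(ℝ, ℝ) := ⟨fun z => -β * min (max z 0) (2 * B) ^ k, by fun_prop⟩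
  have hh : ∀ z, h z = -β * min (max z 0) (2 * B) ^ k := fun _ => rfl
  have hLip : ∀ a b, |h a - h b| ≤ β * (k * (2 * B) ^ (k - 1)) * |a - b| := fun a b => by
    rw [hh, hh, ← mul_sub, abs_mul, abs_neg, abs_of_nonneg hβ, mul_assoc β]
    exact mul_le_mul_of_nonneg_left (abs_clamp_pow_sub_le (by positivity) k a b) hβ
  obtain ⟨u, hu, hu_eq⟩ := exists_reflected_free_path hT Y (by positivity) hLip
  have hR := skorokhodRegulator.continuous hu
  set x : ℝ → ℝ := fun s => u s + skorokhodRegulator u s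
  have hxc : Continuous x := hu.add hR
  have hx_nonneg : ∀ t ∈ Icc 0 T, 0 ≤ x t := fun t ht => skorokhodRegulator.add_nonneg hu ht.1
  have hint : ∀ a b, IntervalIntegrable (fun s => h (x s)) volume a b := fun a b =>
    (h.continuous.comp hxc).intervalIntegrable a b
  have hdrift : ∀ s t, s ≤ t → (∫ r in (0 : ℝ)..t, h (x r)) ≤ ∫ r in (0 : ℝ)..s, h (x r) := by
    intro s t hst
    rw [← intervalIntegral.integral_add_adjacent_intervals (hint 0 s) (hint s t)]
    have hnonneg : 0 ≤ ∫ r in s..t, -h (x r) := by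
      refine intervalIntegral.integral_nonneg hst fun r _ => ?_
      rw [hh, neg_mul, neg_neg]
      exact mul_nonneg hβ (pow_nonneg (le_min (le_max_right _ _) (by positivity)) k)
    rw [intervalIntegral.integral_neg] at hnonneg
    linarith
  have hx_le : ∀ t ∈ Icc 0 T, x t ≤ 2 * B := by
    intro t ht
    obtain ⟨s, hs, hs_eq⟩ := skorokhodRegulator.exists_eq hu ht.1
    have hsT : s ∈ Icc 0 T := ⟨hs.1, hs.2.trans ht.2⟩
    have hyt := abs_le.1 (hB t ht)
    have hys := abs_le.1 (hB s hsT)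
    have hut := hu_eq t ht
    have hus := hu_eq s hsT
    have hdt := hdrift 0 t ht.1
    have hdst := hdrift s t hs.2
    rw [hY t ht] at hut
    rw [hY s hsT] at hus
    rw [intervalIntegral.integral_same] at hdt
    change u t + skorokhodRegulator u t ≤ 2 * B
    rcases max_choice (-u s) 0 with hmax | hmax <;> rw [hs_eq, hmax] <;> linarith
  have hu0 : 0 ≤ u 0 := by
    rw [hu_eq 0 h0, hY 0 h0]
    simpa using hy0
  refine ⟨x, skorokhodRegulator u, hxc.continuousOn, hR.continuousOn, fun t ht => ?_, hx_nonneg,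
    fun s hs t _ hst => skorokhodRegulator.mono hu hs.1 hst, skorokhodRegulator.zero hu0,
    fun s t hs hst _ hpos => skorokhodRegulator.eq_of_forall_pos hu hs hst hpos⟩
  have hcongr : (∫ s in (0 : ℝ)..t, h (x s)) = ∫ s in (0 : ℝ)..t, -β * x s ^ k := by
    refine intervalIntegral.integral_congr fun s hs => ?_
    rw [uIcc_of_le ht.1] at hs
    have hsT : s ∈ Icc 0 T := ⟨hs.1, hs.2.trans ht.2⟩
    simp only [hh, max_eq_left (hx_nonneg s hsT), min_eq_left (hx_le s hsT)]
  rw [← hcongr, ← hY t ht, ← hu_eq t ht]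

end IsReflectedSolution

/-- existence and uniqueness for the reflected integral equation with
polynomial drift `g(x) = -β x^k`: for every continuous input `y : [0,T] → ℝ` with
`y(0) ≥ 0`, there is a unique pair `(x, ℓ)` of continuous functions on `[0,T]`
satisfying (i)–(iv) (uniqueness in the sense of agreement on `[0,T]`). -/
theorem reflected_integral_equation_exists_unique
    (T β : ℝ) (k : ℕ) (hT : 0 < T) (hβ : 0 < β) (hk : 1 ≤ k)
    (y : ℝ → ℝ) (hy : ContinuousOn y (Set.Icc 0 T)) (hy0 : 0 ≤ y 0) :
    ∃ x ℓ : ℝ → ℝ,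
      IsReflectedSolution T β k y x ℓ ∧
      ∀ x' ℓ' : ℝ → ℝ, IsReflectedSolution T β k y x' ℓ' →
        ∀ t ∈ Set.Icc (0 : ℝ) T, x' t = x t ∧ ℓ' t = ℓ t := by
  obtain ⟨x, ℓ, hsol⟩ := IsReflectedSolution.exists_of_continuousOn hT.le hβ.le k hy hy0
  exact ⟨x, ℓ, hsol, fun x' ℓ' hsol' t ht => hsol.unique hβ.le hsol' ht⟩
end
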